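/- arXiv:0808.0133 — 2 statements merged into one kernel-verified Lean document; each statement's English description precedes it below -/
import Mathlib

section
/- Let (A,B) ∈ SL(2,ℝ)² be twisted. Then exactly one of the following four alternatives holds: (i) (A, AB) is twisted; (ii) (BA, B) is twisted; (iii) (A,B) is free; (iv) AB is elliptic, i.e. |tr AB| < 2. -/
open Matrix

noncomputable section

/-- `SL(2,ℝ)`. -/
abbrev SL2 := Matrix.SpecialLinearGroup (Fin 2) ℝ

/-- Operator norm of a `2 × 2` real matrix, induced by the Euclidean norm on `ℝ²`. -/
noncomputable def opNorm (A : Matrix (Fin 2) (Fin 2) ℝ) : ℝ :=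
  ‖Matrix.toEuclideanCLM (𝕜 := ℝ) A‖

/-- Trace of an element of `SL(2,ℝ)`. -/
def trace2 (A : SL2) : ℝ := Matrix.trace (A : Matrix (Fin 2) (Fin 2) ℝ)

/-- Topology on `SL(2,ℝ)` induced from the space of `2 × 2` real matrices. -/
instance : TopologicalSpace SL2 := instTopologicalSpaceSubtype

/-- The real projective line: quotient of `ℝ² ∖ {0}` by nonzero scalar multiplication. -/
abbrev P1 := Projectivization ℝ (Fin 2 → ℝ)

/-- The quotient topology on the real projective line. -/
instance : TopologicalSpace P1 := instTopologicalSpaceQuotient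

/-- The projective action of `SL(2,ℝ)` on the real projective line. -/
def projAct (A : SL2) : P1 → P1 :=
  Projectivization.map (Matrix.SpecialLinearGroup.toLin' A).toLinearMap
    (Matrix.SpecialLinearGroup.toLin' A).injective

/-- For a word `w = [i₁, …, iₙ]`, the product `A_{iₙ} ⋯ A_{i₁}`. -/
def wordProd {N : ℕ} (A : Fin N → SL2) (w : List (Fin N)) : SL2 :=
  (w.reverse.map A).prod

/-- Uniform hyperbolicity with respect to the full shift on `N` symbols:
every product of `n` matrices has operator norm at least `C·λⁿ`. -/
def UnifHyp {N : ℕ} (A : Fin N → SL2) : Prop :=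
  ∃ C > (0:ℝ), ∃ lam > (1:ℝ), ∀ w : List (Fin N), w ≠ [] →
    opNorm (wordProd A w : Matrix (Fin 2) (Fin 2) ℝ) ≥ C * lam ^ w.length

/-- Transitivity of the subshift of finite type given by the transition relation `T`:
any symbol can be joined to any other by an admissible word. -/
def TransitiveSubshift {N : ℕ} (T : Fin N → Fin N → Prop) : Prop :=
  ∀ α β : Fin N, ∃ w : List (Fin N), w ≠ [] ∧ w.Chain' T ∧
    w.head? = some α ∧ w.getLast? = some β

/-- Uniform hyperbolicity with respect to the subshift determined by the
transition relation `T`. -/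
def UnifHypSub {N : ℕ} (T : Fin N → Fin N → Prop) (A : Fin N → SL2) : Prop :=
  ∃ C > (0:ℝ), ∃ lam > (1:ℝ), ∀ w : List (Fin N), w ≠ [] → w.Chain' T →
    opNorm (wordProd A w : Matrix (Fin 2) (Fin 2) ℝ) ≥ C * lam ^ w.length

/-- For a word `w` in two letters (`true ↦ A`, `false ↦ B`), the corresponding
product of the matrices `A`, `B` (letters applied right-to-left). -/
def pairProd (A B : SL2) (w : List Bool) : SL2 :=
  (w.reverse.map fun b => if b then A else B).prod

/-- Uniform hyperbolicity of a pair `(A,B)` with respect to the full shift on two symbols. -/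
def UnifHypPair (A B : SL2) : Prop :=
  ∃ C > (0:ℝ), ∃ lam > (1:ℝ), ∀ w : List Bool, w ≠ [] →
    opNorm (pairProd A B w : Matrix (Fin 2) (Fin 2) ℝ) ≥ C * lam ^ w.length

/-- The hyperbolicity locus for the full shift on two symbols. -/
def UHpairs : Set (SL2 × SL2) := {p | UnifHypPair p.1 p.2}

/-- The set of pairs having an elliptic product. -/
def Epairs : Set (SL2 × SL2) :=
  {p | ∃ w : List Bool, w ≠ [] ∧ |trace2 (pairProd p.1 p.2 w)| < 2}

/-- An open interval in the projective line: a nonempty open connected subset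
whose complement contains more than one point. -/
def IsOpenInterval (I : Set P1) : Prop :=
  IsOpen I ∧ IsConnected I ∧ Iᶜ.Nontrivial

/-- `H₀`: pairs possessing a common strictly invariant open interval. -/
def H0 : Set (SL2 × SL2) :=
  {p | ∃ I : Set P1, IsOpenInterval I ∧
        projAct p.1 '' closure I ⊆ I ∧ projAct p.2 '' closure I ⊆ I}

/-- `H_id`: pairs with `|tr A| > 2`, `|tr B| > 2`, `|tr AB| > 2`, `tr A · tr B · tr AB < 0`. -/
def Hid : Set (SL2 × SL2) :=
  {p | 2 < |trace2 p.1| ∧ 2 < |trace2 p.2| ∧ 2 < |trace2 (p.1 * p.2)| ∧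
       trace2 p.1 * trace2 p.2 * trace2 (p.1 * p.2) < 0}

/-- `F₊(A,B) = (A, AB)`. -/
def Fplus (p : SL2 × SL2) : SL2 × SL2 := (p.1, p.1 * p.2)

/-- `F₋(A,B) = (BA, B)`. -/
def Fminus (p : SL2 × SL2) : SL2 × SL2 := (p.2 * p.1, p.2)

/-- `applySeq [ε₁, …, ε_k] = F_{ε_k} ∘ ⋯ ∘ F_{ε₁}`, where `true` stands for `+`
and `false` for `−`. -/
def applySeq (s : List Bool) (p : SL2 × SL2) : SL2 × SL2 :=
  s.foldl (fun q e => if e then Fplus q else Fminus q) p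

/-- A pair `(A,B)` is free if `|tr A| ≥ 2`, `|tr B| ≥ 2`, `|tr AB| ≥ 2` and
`tr A · tr B · tr AB < 0`. -/
def FreePair (p : SL2 × SL2) : Prop :=
  2 ≤ |trace2 p.1| ∧ 2 ≤ |trace2 p.2| ∧ 2 ≤ |trace2 (p.1 * p.2)| ∧
    trace2 p.1 * trace2 p.2 * trace2 (p.1 * p.2) < 0

/-- A pair is straight if it lies in the closure of `H₀`. -/
def Straight (p : SL2 × SL2) : Prop := p ∈ closure H0

/-- A pair `(A,B)` is twisted if `|tr A| ≥ 2`, `|tr B| ≥ 2` and it is not straight. -/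
def Twisted (p : SL2 × SL2) : Prop :=
  2 ≤ |trace2 p.1| ∧ 2 ≤ |trace2 p.2| ∧ ¬ Straight p

/-- A pair is almost hyperbolic if every image of it under the monoid generated by
`F₊`, `F₋` consists of two non-elliptic matrices. -/
def AlmostHyperbolic (p : SL2 × SL2) : Prop :=
  ∀ s : List Bool, 2 ≤ |trace2 (applySeq s p).1| ∧ 2 ≤ |trace2 (applySeq s p).2|

/-- Group-hyperbolicity of a pair: exponential growth over all reduced words
in the free group on two generators (`true ↦ A`, `false ↦ B`). -/
def GroupHyp (A B : SL2) : Prop :=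
  ∃ C > (0:ℝ), ∃ τ > (0:ℝ), ∀ g : FreeGroup Bool, g ≠ 1 →
    opNorm ((FreeGroup.lift (fun b => if b then A else B) g : SL2) :
        Matrix (Fin 2) (Fin 2) ℝ) ≥
      C * Real.exp (τ * (FreeGroup.toWord g).length)

/-- `M` has finitely many connected components, and distinct components have
disjoint closures. -/
def FinCompDisjClosures (M : Set P1) : Prop :=
  {C : Set P1 | ∃ x ∈ M, C = connectedComponentIn M x}.Finite ∧
    ∀ x ∈ M, ∀ y ∈ M, connectedComponentIn M x ≠ connectedComponentIn M y →
      closure (connectedComponentIn M x) ∩ closure (connectedComponentIn M y) = ∅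

end

/-!
Straightness turns out to depend only on the traces `x = tr A`, `y = tr B`, `z = tr AB`. For
`x, y ≥ 2`, write `x = l + l⁻¹`, `y = m + m⁻¹` with `l, m ≥ 1`; then `(A, B)` is straight if and
only if `z ≥ l * m⁻¹ + m * l⁻¹` (`straight_iff`, stated in the sign-invariant form
`TraceStraight`).

* A pair in `H₀` becomes, in the basis of the two endpoints of its invariant interval, a pair of
  matrices with entries of constant sign (`cone_of_H0`), and for these the inequality is a
  Cauchy-Schwarz type estimate (`TraceStraight_of_nonneg`). The inequality is closed, hence holds
  on the closure of `H₀`.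
* Conversely, let `v`, `w` be eigenvectors of `A`, `B` for the eigenvalues `l`, `m`. If they are
  independent, the inequality says precisely that, up to the sign of `w`, both matrices have
  nonnegative entries in the basis `v, w` (`straight_of_TraceStraight_pos`); such pairs are limits
  of entrywise positive pairs, which lie in `H₀` (`weakCone_straight`, `posCone_mem_H0`). If they
  are parallel, the pair is triangularisable and a perturbation of the diagonal of `A` reduces to
  the previous situation (`triangular_straight`).

It remains to study real triples. The polynomial `x² + y² + z² - xyz - 4 = tr [A, B] - 2` is
invariant under `(A, B) ↦ (A, AB)` and `(A, B) ↦ (BA, B)`, and twistedness means that it is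
positive and that `2z < xy` (for `x, y ≥ 2`). For `z ≥ 2` the new pairs are twisted iff `xz < 2y`,
respectively `yz < 2x`; exactly one of these happens (`alternatives_pos`). For `z < 0` neither new
pair is twisted, and the pair is free or `AB` is elliptic.
-/

/-- The Fricke polynomial: for `x = tr A`, `y = tr B`, `z = tr AB` its value is
`tr [A, B] - 2`. It vanishes when `A` and `B` have a common eigenvector. -/
def commDefect (x y z : ℝ) : ℝ := x ^ 2 + y ^ 2 + z ^ 2 - x * y * z - 4

/-- Straightness expressed through `x = tr A`, `y = tr B`, `z = tr AB`. For `x, y ≥ 2` it says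
that `z` is at least the smaller root of `commDefect x y z = 0`, viewed as a quadratic in `z`
with sum of roots `x * y`; the form below is moreover invariant under `A ↦ -A` and `B ↦ -B`. -/
def TraceStraight (x y z : ℝ) : Prop := commDefect x y z ≤ 0 ∨ (x * y) ^ 2 ≤ 2 * (x * y * z)

/-- A quadratic in the largest variable `x`, convex, and nonpositive at both ends of the interval
from `max y z` to `y * z / 2`. -/
lemma commDefect_nonpos_of_max {x y z : ℝ} (hx : 2 ≤ x) (hy : 2 ≤ y) (hz : 2 ≤ z) (hxy : y ≤ x) (hxz : z ≤ x)
    (h : 2 * x ≤ y * z) : commDefect x y z ≤ 0 := by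
  unfold commDefect
  rcases le_total y z with hyz | hyz
  · nlinarith [mul_nonneg (sub_nonneg.2 hxz) (sub_nonneg.2 h), mul_nonneg (sub_nonneg.2 hy) (sub_nonneg.2 hz), mul_nonneg (sub_nonneg.2 hy) (sub_nonneg.2 hyz), mul_nonneg (mul_nonneg (sub_nonneg.2 hy) (sub_nonneg.2 hz)) (sub_nonneg.2 hyz), mul_nonneg (sub_nonneg.2 hy) (sub_nonneg.2 hxz)]
  · nlinarith [mul_nonneg (sub_nonneg.2 hxy) (sub_nonneg.2 h), mul_nonneg (sub_nonneg.2 hy) (sub_nonneg.2 hz), mul_nonneg (sub_nonneg.2 hz) (sub_nonneg.2 hyz), mul_nonneg (mul_nonneg (sub_nonneg.2 hy) (sub_nonneg.2 hz)) (sub_nonneg.2 hyz)]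

lemma projAct_mk (A : SL2) (v : Fin 2 → ℝ) (hv : v ≠ 0) :
    ∃ h, projAct A (Projectivization.mk ℝ v hv) =
      Projectivization.mk ℝ ((A : Matrix (Fin 2) (Fin 2) ℝ) *ᵥ v) h := by
  refine ⟨?_, ?_⟩
  · intro h0
    apply hv
    have := (Matrix.SpecialLinearGroup.toLin' A).injective (a₁ := v) (a₂ := 0)
    apply this
    rw [map_zero]
    exact h0
  · rfl

lemma isQuotientMap_mk : Topology.IsQuotientMap
    (fun u : {v : Fin 2 → ℝ // v ≠ 0} => (Projectivization.mk ℝ u.1 u.2 : P1)) :=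
  isQuotientMap_quotient_mk'

lemma continuous_trace2 : Continuous trace2 := by
  unfold trace2
  exact Continuous.matrix_trace continuous_subtype_val
lemma continuous_mulSL2 : Continuous (fun p : SL2 × SL2 => p.1 * p.2) := by
  refine Continuous.subtype_mk ?_ _
  exact (continuous_subtype_val.comp continuous_fst).matrix_mul (continuous_subtype_val.comp continuous_snd)
lemma continuous_negSL2 : Continuous (fun p : SL2 => - p) := by
  refine Continuous.subtype_mk ?_ _
  exact (continuous_subtype_val.neg)
/-! ### Nonnegative matrices and the trace inequality -/

lemma trace_conj {A M P : Matrix (Fin 2) (Fin 2) ℝ} (hM : M.det ≠ 0) (h : A * M = M * P) :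
    A.trace = P.trace := by
  have hu : IsUnit M.det := isUnit_iff_ne_zero.2 hM
  have : A = M * P * M⁻¹ := by rw [← h, Matrix.mul_nonsing_inv_cancel_right _ _ hu]
  rw [this, Matrix.trace_mul_comm, Matrix.nonsing_inv_mul_cancel_left _ _ hu]

lemma det_conj {A M P : Matrix (Fin 2) (Fin 2) ℝ} (hM : M.det ≠ 0) (h : A * M = M * P) :
    A.det = P.det := by
  have := congrArg Matrix.det h
  rw [Matrix.det_mul, Matrix.det_mul, mul_comm] at this
  exact mul_left_cancel₀ hM this

lemma TraceStraight_neg_left {x y z : ℝ} : TraceStraight (-x) y (-z) ↔ TraceStraight x y z := by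
  unfold TraceStraight commDefect; ring_nf
lemma TraceStraight_neg_right {x y z : ℝ} : TraceStraight x (-y) (-z) ↔ TraceStraight x y z := by
  unfold TraceStraight commDefect; ring_nf

/-- If `2 * z < x * y`, then `2 * z - x * y = -(u - k)` with `u = -(a - d) * (e - h)`,
`k = 2 * (b * g + c * f)` and `0 ≤ k ≤ u`; hence `(2 * z - x * y) ^ 2 ≤ u ^ 2`, and
`u ^ 2 ≤ (x ^ 2 - 4) * (y ^ 2 - 4)` because `x ^ 2 - 4 = (a - d) ^ 2 + 4 * b * c`. -/
lemma TraceStraight_of_nonneg {a b c d e f g h : ℝ} (h1 : a * d - b * c = 1) (h2 : e * h - f * g = 1)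
    (ha : 0 ≤ a) (hb : 0 ≤ b) (hc : 0 ≤ c) (hd : 0 ≤ d)
    (he : 0 ≤ e) (hf : 0 ≤ f) (hg : 0 ≤ g) (hh : 0 ≤ h) :
    TraceStraight (a + d) (e + h) (a * e + b * g + c * f + d * h) := by
  unfold TraceStraight
  rcases le_or_gt ((a + d) * (e + h)) (2 * (a * e + b * g + c * f + d * h)) with hs | hs
  · right
    have : 0 ≤ (a + d) * (e + h) := by positivity
    nlinarith
  · left
    have key : 4 * commDefect (a + d) (e + h) (a * e + b * g + c * f + d * h) =
        (-((a - d) * (e - h)) - 2 * (b * g + c * f)) ^ 2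
          - ((a - d) ^ 2 + 4 * (b * c)) * ((e - h) ^ 2 + 4 * (f * g)) := by
      unfold commDefect
      linear_combination (4 * (4 - (e+h)^2)) * h1 + (-4 * ((a-d)^2+4*b*c)) * h2
    have hk : 0 ≤ b * g + c * f := by positivity
    have hu : 2 * (b * g + c * f) ≤ -((a - d) * (e - h)) := by nlinarith
    have h3 : (-((a - d) * (e - h)) - 2 * (b * g + c * f)) ^ 2 ≤ ((a - d) * (e - h)) ^ 2 := by
      nlinarith
    have h4 : ((a - d) * (e - h)) ^ 2 ≤
        ((a - d) ^ 2 + 4 * (b * c)) * ((e - h) ^ 2 + 4 * (f * g)) := by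
      rw [mul_pow]
      gcongr <;> nlinarith [mul_nonneg hb hc, mul_nonneg hf hg]
    linarith

/-- All entries of `P` are nonnegative, or all are nonpositive: projectively, `P` maps the closed
first quadrant into itself. -/
def ConstSign (P : Matrix (Fin 2) (Fin 2) ℝ) : Prop :=
  (∀ i j, 0 ≤ P i j) ∨ (∀ i j, P i j ≤ 0)

lemma TraceStraight_of_constSign {P Q : Matrix (Fin 2) (Fin 2) ℝ} (hP : ConstSign P)
    (hQ : ConstSign Q) (h1 : P.det = 1) (h2 : Q.det = 1) :
    TraceStraight P.trace Q.trace (P * Q).trace := by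
  have main : ∀ P Q : Matrix (Fin 2) (Fin 2) ℝ, (∀ i j, 0 ≤ P i j) → (∀ i j, 0 ≤ Q i j) →
      P.det = 1 → Q.det = 1 → TraceStraight P.trace Q.trace (P * Q).trace := by
    intro P Q hP hQ h1 h2
    rw [Matrix.det_fin_two] at h1 h2
    have := TraceStraight_of_nonneg h1 h2 (hP _ _) (hP _ _) (hP _ _) (hP _ _)
      (hQ _ _) (hQ _ _) (hQ _ _) (hQ _ _)
    convert this using 1
    · simp [Matrix.trace_fin_two]
    · simp [Matrix.trace_fin_two]
    · simp [Matrix.trace_fin_two, Matrix.mul_apply]; ring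
  have left : ∀ P Q : Matrix (Fin 2) (Fin 2) ℝ, ConstSign P → (∀ i j, 0 ≤ Q i j) →
      P.det = 1 → Q.det = 1 → TraceStraight P.trace Q.trace (P * Q).trace := by
    intro P Q hP hQ h1 h2
    rcases hP with hP | hP
    · exact main P Q hP hQ h1 h2
    · have := main (-P) Q (fun i j => by simpa using hP i j) hQ (by simpa [Matrix.det_neg] using h1) h2
      rw [Matrix.neg_mul, Matrix.trace_neg, Matrix.trace_neg, TraceStraight_neg_left] at this
      exact this
  rcases hQ with hQ | hQ
  · exact left P Q hP hQ h1 h2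
  · have := left P (-Q) hP (fun i j => by simpa using hQ i j) h1 (by simpa [Matrix.det_neg] using h2)
    rw [Matrix.mul_neg, Matrix.trace_neg, Matrix.trace_neg, TraceStraight_neg_right] at this
    exact this

/-! ### From an invariant interval to the trace inequality -/

/-- In a suitable basis (the columns of `M`, spanning the lines at the two ends of `I`), every
element mapping `closure I` into `I` has entries of constant sign. -/
lemma cone_of_H0 {I : Set P1} (hI : IsOpenInterval I) {A₀ : SL2}
    (hA₀ : projAct A₀ '' closure I ⊆ I) :
    ∃ M : Matrix (Fin 2) (Fin 2) ℝ, M.det ≠ 0 ∧ ∀ A : SL2, projAct A '' closure I ⊆ I →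
      ∃ P : Matrix (Fin 2) (Fin 2) ℝ, (A : Matrix (Fin 2) (Fin 2) ℝ) * M = M * P ∧ ConstSign P := by
  obtain ⟨hop, ⟨hne, hpc⟩, hnt⟩ := hI
  have hq : ∃ q : P1, q ∉ closure I := by
    by_contra! hall
    obtain ⟨p, hp, -⟩ := hnt
    apply hp
    apply hA₀
    refine ⟨projAct A₀⁻¹ p, hall _, ?_⟩
    induction p using Projectivization.ind with
    | h v hv =>
      obtain ⟨h1, e1⟩ := projAct_mk A₀⁻¹ v hv
      obtain ⟨h2, e2⟩ := projAct_mk A₀ _ h1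
      rw [e1, e2]
      congr 1
      rw [Matrix.mulVec_mulVec, ← Matrix.SpecialLinearGroup.coe_mul]
      simp
  obtain ⟨q, hq⟩ := hq
  induction q using Projectivization.ind with
  | h v hv =>
  obtain ⟨a, ha⟩ : ∃ a, a = v 0 := ⟨_, rfl⟩
  obtain ⟨b, hb⟩ : ∃ b, b = v 1 := ⟨_, rfl⟩
  have hvab : v = ![a, b] := by
    ext i; fin_cases i <;> simp [ha, hb]
  have hn : 0 < a ^ 2 + b ^ 2 := by
    by_contra hcon
    apply hv
    have h0 : a = 0 := by nlinarith
    have h1 : b = 0 := by nlinarith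
    rw [hvab, h0, h1]; ext i; fin_cases i <;> rfl
  -- the affine chart centred at the point `[-b : a]`, with `[v]` at infinity
  have hφ0 : ∀ t : ℝ, (![t * a - b, t * b + a] : Fin 2 → ℝ) ≠ 0 := by
    intro t h0
    have e0 : t * a - b = 0 := congrFun h0 0
    have e1 : t * b + a = 0 := congrFun h0 1
    have : a ^ 2 + b ^ 2 = 0 := by linear_combination a * e1 - b * e0
    linarith
  have hψ0 : ∀ t : ℝ, (![a - t * b, b + t * a] : Fin 2 → ℝ) ≠ 0 := by
    intro t h0
    have e0 : a - t * b = 0 := congrFun h0 0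
    have e1 : b + t * a = 0 := congrFun h0 1
    have : a ^ 2 + b ^ 2 = 0 := by linear_combination a * e0 + b * e1
    linarith
  let φ : ℝ → P1 := fun t => Projectivization.mk ℝ _ (hφ0 t)
  -- `ψ s = φ (1 / s)` is a chart around infinity
  let ψ : ℝ → P1 := fun t => Projectivization.mk ℝ _ (hψ0 t)
  have hφc : Continuous φ := by
    refine isQuotientMap_mk.continuous.comp (f := fun t : ℝ => (⟨_, hφ0 t⟩ : {v : Fin 2 → ℝ // v ≠ 0})) ?_
    refine Continuous.subtype_mk ?_ _
    refine continuous_pi fun i => ?_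
    fin_cases i <;> simp <;> fun_prop
  have hψc : Continuous ψ := by
    refine isQuotientMap_mk.continuous.comp (f := fun t : ℝ => (⟨_, hψ0 t⟩ : {v : Fin 2 → ℝ // v ≠ 0})) ?_
    refine Continuous.subtype_mk ?_ _
    refine continuous_pi fun i => ?_
    fin_cases i <;> simp <;> fun_prop
  let L : (Fin 2 → ℝ) → ℝ := fun u => a * u 1 - b * u 0
  let N : (Fin 2 → ℝ) → ℝ := fun u => a * u 0 + b * u 1
  let f : P1 → ℝ := fun p => N p.rep / L p.rep
  have hf : ∀ u hu, f (Projectivization.mk ℝ u hu) = N u / L u := by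
    intro u hu
    obtain ⟨c, hc⟩ := Projectivization.exists_smul_eq_mk_rep ℝ u hu
    have hc0 : (c : ℝ) ≠ 0 := c.ne_zero
    have h0 : (Projectivization.mk ℝ u hu).rep 0 = c * u 0 := by rw [← hc]; rfl
    have h1 : (Projectivization.mk ℝ u hu).rep 1 = c * u 1 := by rw [← hc]; rfl
    simp only [f, N, L, h0, h1]
    rw [show a * (c * u 0) + b * (c * u 1) = c * (a * u 0 + b * u 1) by ring,
      show a * (c * u 1) - b * (c * u 0) = c * (a * u 1 - b * u 0) by ring,
      mul_div_mul_left _ _ hc0]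
  have hL : ∀ u hu, Projectivization.mk ℝ u hu ∈ I → L u ≠ 0 := by
    intro u hu hmem h0
    apply hq
    apply subset_closure
    convert hmem using 1
    rw [Projectivization.mk_eq_mk_iff']
    have h0' : a * u 1 - b * u 0 = 0 := h0
    have hN : N u ≠ 0 := by
      intro hN
      apply hu
      have hN' : a * u 0 + b * u 1 = 0 := hN
      have e0 : (a ^ 2 + b ^ 2) * u 0 = 0 := by linear_combination a * hN' - b * h0'
      have e1 : (a ^ 2 + b ^ 2) * u 1 = 0 := by linear_combination b * hN' + a * h0'
      ext i; fin_cases i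
      · simpa [hn.ne'] using e0
      · simpa [hn.ne'] using e1
    refine ⟨(a ^ 2 + b ^ 2) / N u, ?_⟩
    rw [hvab]
    ext i; fin_cases i
    · simp; field_simp; simp only [N]; linear_combination -b * h0'
    · simp; field_simp; simp only [N]; linear_combination a * h0'
  have hφf : ∀ u hu, L u ≠ 0 → φ (N u / L u) = Projectivization.mk ℝ u hu := by
    intro u hu h0
    simp only [φ]
    rw [Projectivization.mk_eq_mk_iff']
    refine ⟨(a ^ 2 + b ^ 2) / L u, ?_⟩
    ext i; fin_cases i
    · simp; field_simp; simp only [N, L]; ring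
    · simp; field_simp; simp only [N, L]; ring
  have hfφ : ∀ t, f (φ t) = t := by
    intro t
    simp only [φ, hf, N, L]
    simp
    rw [div_eq_iff]
    · ring
    · have : a * (t * b + a) - b * (t * a - b) = a ^ 2 + b ^ 2 := by ring
      rw [this]; exact hn.ne'
  have hfc : ContinuousOn f I := by
    rw [isQuotientMap_mk.continuousOn_isOpen_iff hop]
    have k0 : Continuous fun u : {v : Fin 2 → ℝ // v ≠ 0} => u.1 0 :=
      (continuous_apply 0).comp continuous_subtype_val
    have k1 : Continuous fun u : {v : Fin 2 → ℝ // v ≠ 0} => u.1 1 :=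
      (continuous_apply 1).comp continuous_subtype_val
    have : ContinuousOn (fun u : {v : Fin 2 → ℝ // v ≠ 0} => N u.1 / L u.1)
        ((fun u : {v : Fin 2 → ℝ // v ≠ 0} => (Projectivization.mk ℝ u.1 u.2 : P1)) ⁻¹' I) := by
      apply ContinuousOn.div
      · exact ((k0.const_mul a).add (k1.const_mul b)).continuousOn
      · exact ((k1.const_mul a).sub (k0.const_mul b)).continuousOn
      · intro u hu; exact hL u.1 u.2 hu
    exact this.congr fun u _ => hf u.1 u.2
  have hJ : f '' I = φ ⁻¹' I := by
    ext t; constructor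
    · rintro ⟨p, hp, rfl⟩
      induction p using Projectivization.ind with
      | h u hu =>
        rw [Set.mem_preimage, hf, hφf u hu (hL u hu hp)]
        exact hp
    · intro ht; exact ⟨φ t, ht, hfφ t⟩
  set J := φ ⁻¹' I with hJdef
  have hJc : IsPreconnected J := hJ ▸ hpc.image f hfc
  have hJo : IsOpen J := hop.preimage hφc
  have hJn : J.Nonempty := hJ ▸ hne.image f
  -- `I` stays away from infinity, so its trace `J` in the chart is bounded
  obtain ⟨ε, hε, hball⟩ : ∃ ε > 0, ∀ s, |s| < ε → ψ s ∉ closure I := by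
    have hU : IsOpen (ψ ⁻¹' (closure I)ᶜ) := isClosed_closure.isOpen_compl.preimage hψc
    have h0 : (0:ℝ) ∈ ψ ⁻¹' (closure I)ᶜ := by
      show ψ 0 ∉ closure I
      convert hq using 2
      simp only [ψ]
      congr 1
      rw [hvab]; simp
    obtain ⟨ε, hε, hb⟩ := Metric.isOpen_iff.1 hU 0 h0
    refine ⟨ε, hε, fun s hs => hb ?_⟩
    simpa using hs
  have hbd : ∀ t ∈ J, |t| ≤ 1 / ε := by
    intro t ht
    by_contra! hlt
    have htpos : 0 < |t| := lt_trans (by positivity) hlt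
    have ht0 : t ≠ 0 := abs_pos.1 htpos
    apply hball (1 / t)
    · rw [abs_div, abs_one, div_lt_iff₀ htpos]
      rw [div_lt_iff₀ hε] at hlt; linarith
    · apply subset_closure
      have : ψ (1 / t) = φ t := by
        simp only [ψ, φ]
        rw [Projectivization.mk_eq_mk_iff']
        refine ⟨1 / t, ?_⟩
        ext i; fin_cases i
        · simp; field_simp
        · simp; field_simp
      rw [this]; exact ht
  have hba : BddAbove J := ⟨1 / ε, fun t ht => (abs_le.1 (hbd t ht)).2⟩
  have hbb : BddBelow J := ⟨-(1 / ε), fun t ht => (abs_le.1 (hbd t ht)).1⟩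
  set α := sInf J with hα
  set β := sSup J with hβ
  have hJI : ∀ t ∈ J, t ∈ Set.Icc α β := fun t ht => ⟨csInf_le hbb ht, le_csSup hba ht⟩
  have hαβ : α < β := by
    obtain ⟨t, ht⟩ := hJn
    obtain ⟨δ, hδ, hb⟩ := Metric.isOpen_iff.1 hJo t ht
    have : t + δ / 2 ∈ J := hb (by simp [abs_of_pos hδ]; linarith)
    have h1 := (hJI _ ht).1
    have h2 := (hJI _ this).2
    linarith
  have hIcc : ∀ t ∈ Set.Icc α β, φ t ∈ closure I := by
    intro t ht
    rw [← closure_Ioo hαβ.ne] at ht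
    have h1 : t ∈ closure J := closure_mono (IsConnected.Ioo_csInf_csSup_subset ⟨hJn, hJc⟩ hbb hba) ht
    have h2 := image_closure_subset_closure_image hφc (Set.mem_image_of_mem φ h1)
    exact closure_mono (Set.image_preimage_subset φ I) h2
  refine ⟨!![α * a - b, β * a - b; α * b + a, β * b + a], ?_, ?_⟩
  · rw [Matrix.det_fin_two_of]
    have : (α * a - b) * (β * b + a) - (β * a - b) * (α * b + a) = (α - β) * (a ^ 2 + b ^ 2) := by
      ring
    rw [this]
    exact mul_ne_zero (sub_ne_zero.2 hαβ.ne) hn.ne'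
  intro A hA
  let w : ℝ → Fin 2 → ℝ := fun t => (A : Matrix (Fin 2) (Fin 2) ℝ) *ᵥ ![t * a - b, t * b + a]
  have hw : ∀ t ∈ Set.Icc α β, L (w t) ≠ 0 ∧ N (w t) / L (w t) ∈ Set.Icc α β := by
    intro t ht
    obtain ⟨h1, e1⟩ := projAct_mk A _ (hφ0 t)
    have hmem : Projectivization.mk ℝ (w t) h1 ∈ I := by
      rw [← e1]; exact hA ⟨φ t, hIcc t ht, rfl⟩
    have hLt := hL _ h1 hmem
    refine ⟨hLt, hJI _ ?_⟩
    show φ _ ∈ I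
    rw [hφf _ h1 hLt]; exact hmem
  have hwc : Continuous fun t => L (w t) := by
    simp only [L, w, Matrix.mulVec, dotProduct, Fin.sum_univ_two]
    simp
    fun_prop
  have hαm : α ∈ Set.Icc α β := ⟨le_rfl, hαβ.le⟩
  have hβm : β ∈ Set.Icc α β := ⟨hαβ.le, le_rfl⟩
  -- the denominator of the fractional linear map `A` has no zero on `[α, β]`
  have hsign : 0 < L (w α) ∧ 0 < L (w β) ∨ L (w α) < 0 ∧ L (w β) < 0 := by
    by_contra hcon
    have h0 : (0:ℝ) ∈ Set.uIcc (L (w α)) (L (w β)) := by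
      rw [Set.mem_uIcc]
      by_contra hcon2
      apply hcon
      rcases lt_or_gt_of_ne (hw α hαm).1 with h1 | h1 <;>
      rcases lt_or_gt_of_ne (hw β hβm).1 with h2 | h2
      · exact Or.inr ⟨h1, h2⟩
      · exact absurd (Or.inl ⟨h1.le, h2.le⟩) hcon2
      · exact absurd (Or.inr ⟨h2.le, h1.le⟩) hcon2
      · exact Or.inl ⟨h1, h2⟩
    obtain ⟨t, ht, hLt⟩ := intermediate_value_uIcc (hwc.continuousOn (s := Set.uIcc α β)) h0
    rw [Set.uIcc_of_le hαβ.le] at ht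
    exact (hw t ht).1 hLt
  have hrep : ∀ t, L (w t) ≠ 0 → ∀ τ, τ = N (w t) / L (w t) →
      w t 0 = L (w t) / (a ^ 2 + b ^ 2) * (τ * a - b) ∧
      w t 1 = L (w t) / (a ^ 2 + b ^ 2) * (τ * b + a) := by
    intro t ht τ hτ
    rw [eq_div_iff ht] at hτ
    constructor
    · field_simp
      have : w t 0 * (a ^ 2 + b ^ 2) = a * (τ * L (w t)) - b * L (w t) := by
        rw [hτ]; simp only [N, L]; ring
      linear_combination this
    · field_simp
      have : w t 1 * (a ^ 2 + b ^ 2) = b * (τ * L (w t)) + a * L (w t) := by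
        rw [hτ]; simp only [N, L]; ring
      linear_combination this
  obtain ⟨hα0, hα1⟩ := hw α hαm
  obtain ⟨hβ0, hβ1⟩ := hw β hβm
  obtain ⟨r0, r1⟩ := hrep α hα0 _ rfl
  obtain ⟨r2, r3⟩ := hrep β hβ0 _ rfl
  set σ := N (w α) / L (w α) with hσ
  set τ := N (w β) / L (w β) with hτ
  set k := L (w α) / (a ^ 2 + b ^ 2) with hk
  set l := L (w β) / (a ^ 2 + b ^ 2) with hl
  have hd : β - α ≠ 0 := sub_ne_zero.2 hαβ.ne'
  have hd' : 0 < β - α := sub_pos.2 hαβ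
  have c1 : 0 ≤ (β - σ) / (β - α) := div_nonneg (by linarith [hα1.2]) hd'.le
  have c2 : 0 ≤ (β - τ) / (β - α) := div_nonneg (by linarith [hβ1.2]) hd'.le
  have c3 : 0 ≤ (σ - α) / (β - α) := div_nonneg (by linarith [hα1.1]) hd'.le
  have c4 : 0 ≤ (τ - α) / (β - α) := div_nonneg (by linarith [hβ1.1]) hd'.le
  refine ⟨!![k * ((β - σ) / (β - α)), l * ((β - τ) / (β - α));
    k * ((σ - α) / (β - α)), l * ((τ - α) / (β - α))], ?_, ?_⟩
  · simp only [w, Matrix.mulVec, dotProduct, Fin.sum_univ_two] at r0 r1 r2 r3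
    simp at r0 r1 r2 r3
    ext i j
    fin_cases i <;> fin_cases j <;> simp [Matrix.mul_apply]
    · rw [r0]; field_simp; ring
    · rw [r2]; field_simp; ring
    · rw [r1]; field_simp; ring
    · rw [r3]; field_simp; ring
  · rcases hsign with ⟨s1, s2⟩ | ⟨s1, s2⟩
    · left
      have k0 : 0 ≤ k := div_nonneg s1.le hn.le
      have l0 : 0 ≤ l := div_nonneg s2.le hn.le
      intro i j
      fin_cases i <;> fin_cases j <;> simp <;> positivity
    · right
      have k0 : k ≤ 0 := div_nonpos_of_nonpos_of_nonneg s1.le hn.le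
      have l0 : l ≤ 0 := div_nonpos_of_nonpos_of_nonneg s2.le hn.le
      intro i j
      fin_cases i <;> fin_cases j <;> simp <;>
        exact mul_nonpos_of_nonpos_of_nonneg (by assumption) (by assumption)

lemma TraceStraight_of_H0 {p : SL2 × SL2} (hp : p ∈ H0) :
    TraceStraight (trace2 p.1) (trace2 p.2) (trace2 (p.1 * p.2)) := by
  obtain ⟨I, hI, hA, hB⟩ := hp
  obtain ⟨M, hM, h⟩ := cone_of_H0 hI hA
  obtain ⟨P, hP, sP⟩ := h _ hA
  obtain ⟨Q, hQ, sQ⟩ := h _ hB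
  have hPQ : ((p.1 * p.2 : SL2) : Matrix (Fin 2) (Fin 2) ℝ) * M = M * (P * Q) := by
    rw [Matrix.SpecialLinearGroup.coe_mul, Matrix.mul_assoc, hQ, ← Matrix.mul_assoc, hP,
      Matrix.mul_assoc]
  unfold trace2
  rw [trace_conj hM hP, trace_conj hM hQ, trace_conj hM hPQ]
  exact TraceStraight_of_constSign sP sQ ((det_conj hM hP).symm.trans p.1.2)
    ((det_conj hM hQ).symm.trans p.2.2)

lemma TraceStraight_of_straight {p : SL2 × SL2} (hp : Straight p) :
    TraceStraight (trace2 p.1) (trace2 p.2) (trace2 (p.1 * p.2)) := by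
  have c1 : Continuous fun p : SL2 × SL2 => trace2 p.1 := continuous_trace2.comp continuous_fst
  have c2 : Continuous fun p : SL2 × SL2 => trace2 p.2 := continuous_trace2.comp continuous_snd
  have c3 : Continuous fun p : SL2 × SL2 => trace2 (p.1 * p.2) := continuous_trace2.comp continuous_mulSL2
  have hcl : IsClosed {p : SL2 × SL2 |
      TraceStraight (trace2 p.1) (trace2 p.2) (trace2 (p.1 * p.2))} := by
    refine IsClosed.union (s₁ := {p : SL2 × SL2 |
        commDefect (trace2 p.1) (trace2 p.2) (trace2 (p.1 * p.2)) ≤ 0})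
      (s₂ := {p : SL2 × SL2 | (trace2 p.1 * trace2 p.2) ^ 2 ≤
        2 * (trace2 p.1 * trace2 p.2 * trace2 (p.1 * p.2))}) ?_ (isClosed_le ?_ ?_)
    · refine isClosed_le ?_ continuous_const
      unfold commDefect
      fun_prop
    · fun_prop
    · fun_prop
  exact closure_minimal (fun p hp => TraceStraight_of_H0 hp) hcl hp

/-! ### Invariant cones produce straight pairs -/

/-- Two matrices that are entrywise positive in a common basis strictly preserve the projective
interval of directions with positive coordinates. -/
lemma posCone_mem_H0 {A B : SL2} {M P Q : Matrix (Fin 2) (Fin 2) ℝ} (hM : M.det ≠ 0)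
    (hA : (A : Matrix (Fin 2) (Fin 2) ℝ) * M = M * P)
    (hB : (B : Matrix (Fin 2) (Fin 2) ℝ) * M = M * Q)
    (hP : ∀ i j, 0 < P i j) (hQ : ∀ i j, 0 < Q i j) : (A, B) ∈ H0 := by
  -- the coordinates in the basis of columns of `M`; the product of the two coordinates has a
  -- sign that depends only on the line
  let c : (Fin 2 → ℝ) → Fin 2 → ℝ := fun u => M⁻¹ *ᵥ u
  have hu : IsUnit M.det := isUnit_iff_ne_zero.2 hM
  let q : (Fin 2 → ℝ) → ℝ := fun u => c u 0 * c u 1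
  have hMc : ∀ u, M *ᵥ c u = u := fun u => by
    simp only [c, Matrix.mulVec_mulVec, Matrix.mul_nonsing_inv _ hu, Matrix.one_mulVec]
  have hcM : ∀ u, c (M *ᵥ u) = u := fun u => by
    simp only [c, Matrix.mulVec_mulVec, Matrix.nonsing_inv_mul _ hu, Matrix.one_mulVec]
  have hqs : ∀ (k : ℝ) u, q (k • u) = k ^ 2 * q u := by
    intro k u
    simp only [q, c, Matrix.mulVec_smul, Pi.smul_apply, smul_eq_mul]; ring
  have hqr : ∀ u hu, ∃ k : ℝ, k ≠ 0 ∧ q (Projectivization.mk ℝ u hu).rep = k ^ 2 * q u := by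
    intro u hu
    obtain ⟨k, hk⟩ := Projectivization.exists_smul_eq_mk_rep ℝ u hu
    exact ⟨k, k.ne_zero, by rw [← hk, ← hqs]; rfl⟩
  have hqc : Continuous q := by
    simp only [q, c, Matrix.mulVec, dotProduct, Fin.sum_univ_two]; fun_prop
  let I : Set P1 := {p | 0 < q p.rep}
  let K : Set P1 := {p | 0 ≤ q p.rep}
  have hI : ∀ u hu, Projectivization.mk ℝ u hu ∈ I ↔ 0 < q u := by
    intro u hu
    obtain ⟨k, hk, e⟩ := hqr u hu
    show 0 < q _ ↔ _
    rw [e]; exact mul_pos_iff_of_pos_left (by positivity)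
  have hK : ∀ u hu, Projectivization.mk ℝ u hu ∈ K ↔ 0 ≤ q u := by
    intro u hu
    obtain ⟨k, hk, e⟩ := hqr u hu
    show 0 ≤ q _ ↔ _
    rw [e]; exact mul_nonneg_iff_of_pos_left (by positivity)
  have hKc : IsClosed K := by
    rw [← isQuotientMap_mk.isClosed_preimage]
    have : (fun u : {v : Fin 2 → ℝ // v ≠ 0} => (Projectivization.mk ℝ u.1 u.2 : P1)) ⁻¹' K =
        {u | 0 ≤ q u.1} := by
      ext u; exact hK u.1 u.2
    rw [this]
    exact isClosed_le continuous_const (hqc.comp continuous_subtype_val)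
  have hIo : IsOpen I := by
    rw [← isQuotientMap_mk.isOpen_preimage]
    have : (fun u : {v : Fin 2 → ℝ // v ≠ 0} => (Projectivization.mk ℝ u.1 u.2 : P1)) ⁻¹' I =
        {u | 0 < q u.1} := by
      ext u; exact hI u.1 u.2
    rw [this]
    exact isOpen_lt continuous_const (hqc.comp continuous_subtype_val)
  have hclos : closure I ⊆ K := closure_minimal (fun p hp => le_of_lt (show 0 < q p.rep from hp)) hKc
  have hM0 : ∀ u, u ≠ 0 → M *ᵥ u ≠ 0 := by
    intro u hu0 h
    apply hu0
    rw [← hcM u, h]; simp [c]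
  have key : ∀ (C : SL2) (R : Matrix (Fin 2) (Fin 2) ℝ),
      (C : Matrix (Fin 2) (Fin 2) ℝ) * M = M * R → (∀ i j, 0 < R i j) →
      projAct C '' closure I ⊆ I := by
    rintro C R hC hR _ ⟨p, hp, rfl⟩
    have hpK := hclos hp
    induction p using Projectivization.ind with
    | h u hu0 =>
      rw [hK] at hpK
      obtain ⟨h1, e1⟩ := projAct_mk C u hu0
      rw [e1, hI]
      have hcu : c ((C : Matrix (Fin 2) (Fin 2) ℝ) *ᵥ u) = R *ᵥ c u := by
        conv_lhs => rw [← hMc u, Matrix.mulVec_mulVec, hC, ← Matrix.mulVec_mulVec, hcM]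
      have hne : c u ≠ 0 := by
        intro h
        apply hu0
        rw [← hMc u, h]; simp
      have hne' : c u 0 ≠ 0 ∨ c u 1 ≠ 0 := by
        by_contra! hcon
        exact hne (by ext i; fin_cases i <;> simp [hcon.1, hcon.2])
      simp only [q] at hpK ⊢
      rw [hcu]
      simp only [Matrix.mulVec, dotProduct, Fin.sum_univ_two]
      have r00 := hR 0 0
      have r01 := hR 0 1
      have r10 := hR 1 0
      have r11 := hR 1 1
      generalize c u 0 = s at *
      generalize c u 1 = t at *
      have : (R 0 0 * s + R 0 1 * t) * (R 1 0 * s + R 1 1 * t) =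
        (R 0 0 * R 1 0) * s ^ 2 + (R 0 1 * R 1 1) * t ^ 2 +
          (R 0 0 * R 1 1 + R 0 1 * R 1 0) * (s * t) := by ring
      rw [this]
      rcases hne' with h | h <;> positivity
  refine ⟨I, ⟨hIo, ?_, ?_⟩, key A P hA hP, key B Q hB hQ⟩
  · -- `I` is the image of the half-line `s > 0` under `s ↦ [M (s, 1)]`
    have h0 : ∀ s : ℝ, M *ᵥ ![s, 1] ≠ 0 := by
      intro s
      apply hM0
      intro h
      simpa using congrFun h 1
    have : I = (fun s : ℝ => (Projectivization.mk ℝ _ (h0 s) : P1)) '' Set.Ioi 0 := by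
      ext p; constructor
      · intro hp
        induction p using Projectivization.ind with
        | h u hu0 =>
          rw [hI] at hp
          have hp' : 0 < c u 0 * c u 1 := hp
          have h1 : c u 1 ≠ 0 := by rintro h; rw [h] at hp'; simp at hp'
          refine ⟨c u 0 / c u 1, ?_, ?_⟩
          · rw [Set.mem_Ioi]
            have : c u 0 / c u 1 = c u 0 * c u 1 / (c u 1) ^ 2 := by field_simp
            rw [this]; positivity
          · simp only []
            rw [Projectivization.mk_eq_mk_iff']
            refine ⟨(c u 1)⁻¹, ?_⟩
            have hvec : M *ᵥ ![c u 0 / c u 1, 1] = (c u 1)⁻¹ • (M *ᵥ c u) := by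
              rw [← Matrix.mulVec_smul]
              congr 1
              ext i; fin_cases i
              · simp; field_simp
              · simp [h1]
            rw [hvec, hMc]
      · rintro ⟨s, hs, rfl⟩
        simp only [hI, q, hcM]
        simpa using hs
    rw [this]
    refine isConnected_Ioi.image _ (Continuous.continuousOn ?_)
    refine isQuotientMap_mk.continuous.comp (f := fun t : ℝ => (⟨_, h0 t⟩ : {v : Fin 2 → ℝ // v ≠ 0})) ?_
    refine Continuous.subtype_mk ?_ _
    refine continuous_pi fun i => ?_
    simp only [Matrix.mulVec, dotProduct, Fin.sum_univ_two]
    simp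
    fun_prop
  · have e0 : M *ᵥ ![1, 0] ≠ 0 := hM0 _ (fun h => by simpa using congrFun h 0)
    have e1 : M *ᵥ ![0, 1] ≠ 0 := hM0 _ (fun h => by simpa using congrFun h 1)
    refine ⟨Projectivization.mk ℝ _ e0, ?_, Projectivization.mk ℝ _ e1, ?_, ?_⟩
    · rw [Set.mem_compl_iff, hI]; simp only [q, hcM]; simp
    · rw [Set.mem_compl_iff, hI]; simp only [q, hcM]; simp
    · intro h
      rw [Projectivization.mk_eq_mk_iff'] at h
      obtain ⟨k, hk⟩ := h
      rw [← Matrix.mulVec_smul] at hk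
      have := congrArg c hk
      rw [hcM, hcM] at this
      simpa using congrFun this 0

/-- `M * X * M⁻¹` as an element of `SL(2,ℝ)`. -/
noncomputable def conjSL (M X : Matrix (Fin 2) (Fin 2) ℝ) (hM : M.det ≠ 0) (hX : X.det = 1) : SL2 :=
  ⟨M * X * M⁻¹, by
    rw [Matrix.det_mul, Matrix.det_mul, mul_right_comm, ← Matrix.det_mul,
      Matrix.mul_nonsing_inv _ (isUnit_iff_ne_zero.2 hM), Matrix.det_one, hX, one_mul]⟩

lemma conjSL_mul {M X : Matrix (Fin 2) (Fin 2) ℝ} (hM : M.det ≠ 0) (hX : X.det = 1) :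
    (conjSL M X hM hX : Matrix (Fin 2) (Fin 2) ℝ) * M = M * X :=
  Matrix.nonsing_inv_mul_cancel_right _ _ (isUnit_iff_ne_zero.2 hM)

lemma conjSL_of_eq {A : SL2} {M P : Matrix (Fin 2) (Fin 2) ℝ} (hM : M.det ≠ 0)
    (hA : (A : Matrix (Fin 2) (Fin 2) ℝ) * M = M * P) :
    ∃ h, conjSL M P hM h = A := by
  refine ⟨(det_conj hM hA).symm.trans A.2, ?_⟩
  apply Subtype.ext
  show M * P * M⁻¹ = A
  rw [← hA, Matrix.mul_nonsing_inv_cancel_right _ _ (isUnit_iff_ne_zero.2 hM)]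

/-- Weak invariance of a nondegenerate cone suffices for straightness: multiplying a nonnegative
matrix of determinant one by the positive matrix `E ε`, close to the identity, makes all its
entries positive. -/
lemma weakCone_straight {A B : SL2} {M P Q : Matrix (Fin 2) (Fin 2) ℝ} (hM : M.det ≠ 0)
    (hA : (A : Matrix (Fin 2) (Fin 2) ℝ) * M = M * P)
    (hB : (B : Matrix (Fin 2) (Fin 2) ℝ) * M = M * Q)
    (hP : ∀ i j, 0 ≤ P i j) (hQ : ∀ i j, 0 ≤ Q i j) : Straight (A, B) := by
  let E : ℝ → Matrix (Fin 2) (Fin 2) ℝ := fun ε => !![1 + ε ^ 2, ε; ε, 1]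
  have hE : ∀ ε, (E ε).det = 1 := by intro ε; simp [E, Matrix.det_fin_two_of]; ring
  have hE0 : E 0 = 1 := by
    ext i j; fin_cases i <;> fin_cases j <;> simp [E]
  have hEc : Continuous E := by
    refine continuous_matrix fun i j => ?_
    fin_cases i <;> fin_cases j <;> simp [E] <;> fun_prop
  have hpos : ∀ R : Matrix (Fin 2) (Fin 2) ℝ, R.det = 1 → (∀ i j, 0 ≤ R i j) → ∀ ε, 0 < ε →
      ∀ i j, 0 < (R * E ε) i j := by
    intro R hR h0 ε hε i j
    rw [Matrix.det_fin_two] at hR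
    have h00 := h0 0 0
    have h01 := h0 0 1
    have h10 := h0 1 0
    have h11 := h0 1 1
    have hp : 0 < R 0 0 * R 1 1 := by nlinarith [mul_nonneg h01 h10]
    have p0 : 0 < R 0 0 := lt_of_le_of_ne h00 (fun h => by rw [← h] at hp; simp at hp)
    have p1 : 0 < R 1 1 := lt_of_le_of_ne h11 (fun h => by rw [← h] at hp; simp at hp)
    fin_cases i <;> fin_cases j <;> simp [E, Matrix.mul_apply] <;> positivity
  obtain ⟨dP, eP⟩ := conjSL_of_eq hM hA
  obtain ⟨dQ, eQ⟩ := conjSL_of_eq hM hB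
  have hd : ∀ R : Matrix (Fin 2) (Fin 2) ℝ, R.det = 1 → ∀ ε, (R * E ε).det = 1 := by
    intro R hR ε; rw [Matrix.det_mul, hR, hE, one_mul]
  let g : ℝ → SL2 × SL2 := fun ε =>
    (conjSL M (P * E ε) hM (hd P dP ε), conjSL M (Q * E ε) hM (hd Q dQ ε))
  have hg : Continuous g := by
    refine Continuous.prodMk (Continuous.subtype_mk ?_ _) (Continuous.subtype_mk ?_ _) <;> fun_prop
  have hg0 : g 0 = (A, B) := by
    simp only [g, hE0, Matrix.mul_one, eP, eQ]
  refine mem_closure_of_tendsto (f := g) (b := nhdsWithin 0 (Set.Ioi 0)) ?_ ?_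
  · rw [← hg0]; exact hg.continuousAt.tendsto.mono_left nhdsWithin_le_nhds
  · filter_upwards [self_mem_nhdsWithin] with ε hε
    exact posCone_mem_H0 hM (conjSL_mul hM _) (conjSL_mul hM _) (hpos P dP hP ε hε)
      (hpos Q dQ hQ ε hε)

/-- The off-diagonal entries may also all be nonpositive: changing the sign of the second basis
vector changes their signs. -/
lemma weakCone_straight' {A B : SL2} {M P Q : Matrix (Fin 2) (Fin 2) ℝ} (hM : M.det ≠ 0)
    (hA : (A : Matrix (Fin 2) (Fin 2) ℝ) * M = M * P)
    (hB : (B : Matrix (Fin 2) (Fin 2) ℝ) * M = M * Q)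
    (hP0 : 0 ≤ P 0 0) (hP1 : 0 ≤ P 1 1) (hQ0 : 0 ≤ Q 0 0) (hQ1 : 0 ≤ Q 1 1)
    (h : (0 ≤ P 0 1 ∧ 0 ≤ P 1 0 ∧ 0 ≤ Q 0 1 ∧ 0 ≤ Q 1 0) ∨
      (P 0 1 ≤ 0 ∧ P 1 0 ≤ 0 ∧ Q 0 1 ≤ 0 ∧ Q 1 0 ≤ 0)) : Straight (A, B) := by
  rcases h with ⟨h1, h2, h3, h4⟩ | ⟨h1, h2, h3, h4⟩
  · refine weakCone_straight hM hA hB ?_ ?_ <;>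
    · intro i j; fin_cases i <;> fin_cases j <;> assumption
  · let S : Matrix (Fin 2) (Fin 2) ℝ := !![1, 0; 0, -1]
    have hS : S * S = 1 := by ext i j; fin_cases i <;> fin_cases j <;> simp [S, Matrix.mul_apply]
    have conj : ∀ (C : SL2) (R : Matrix (Fin 2) (Fin 2) ℝ),
        (C : Matrix (Fin 2) (Fin 2) ℝ) * M = M * R →
        (C : Matrix (Fin 2) (Fin 2) ℝ) * (M * S) = M * S * (S * R * S) := by
      intro C R hC
      calc (C : Matrix (Fin 2) (Fin 2) ℝ) * (M * S) = M * R * S := by rw [← Matrix.mul_assoc, hC]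
        _ = M * (S * S) * R * S := by rw [hS, Matrix.mul_one]
        _ = M * S * (S * R * S) := by simp only [Matrix.mul_assoc]
    have nonneg : ∀ R : Matrix (Fin 2) (Fin 2) ℝ, 0 ≤ R 0 0 → 0 ≤ R 1 1 → R 0 1 ≤ 0 → R 1 0 ≤ 0 →
        ∀ i j, 0 ≤ (S * R * S) i j := by
      intro R r1 r2 r3 r4 i j
      fin_cases i <;> fin_cases j <;> simp only [Matrix.mul_apply, Fin.sum_univ_two] <;>
        simp [S] <;> assumption
    refine weakCone_straight (M := M * S) ?_ (conj A P hA) (conj B Q hB)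
      (nonneg P hP0 hP1 h1 h2) (nonneg Q hQ0 hQ1 h3 h4)
    rw [Matrix.det_mul]; simpa [S, Matrix.det_fin_two_of] using hM

/-- Pairs with a common eigenvector line, with eigenvalues at least one on it, are straight. After
increasing `l` slightly, the first matrix has a second eigenvector, which together with the common
one spans a weakly invariant cone. -/
lemma triangular_straight {A B : SL2} {M : Matrix (Fin 2) (Fin 2) ℝ} (hM : M.det ≠ 0)
    {l m s t : ℝ} (hl : 1 ≤ l) (hm : 1 ≤ m)
    (hA : (A : Matrix (Fin 2) (Fin 2) ℝ) * M = M * !![l, s; 0, l⁻¹])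
    (hB : (B : Matrix (Fin 2) (Fin 2) ℝ) * M = M * !![m, t; 0, m⁻¹]) : Straight (A, B) := by
  let T : ℝ → Matrix (Fin 2) (Fin 2) ℝ := fun ε =>
    !![l + |ε|, s; 0, (l + |ε|)⁻¹]
  have hl0 : ∀ ε : ℝ, l + |ε| ≠ 0 := fun ε => by positivity
  have hT : ∀ ε, (T ε).det = 1 := by
    intro ε; simp [T, Matrix.det_fin_two_of, hl0 ε]
  have hTc : Continuous T := by
    refine continuous_matrix fun i j => ?_
    fin_cases i <;> fin_cases j <;> simp [T]
    · fun_prop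
    · exact continuous_const
    · exact continuous_const
    · exact Continuous.inv₀ (by fun_prop) hl0
  obtain ⟨dP, eP⟩ := conjSL_of_eq hM hA
  let g : ℝ → SL2 × SL2 := fun ε => (conjSL M (T ε) hM (hT ε), B)
  have hg : Continuous g := by
    refine Continuous.prodMk (Continuous.subtype_mk ?_ _) continuous_const
    fun_prop
  have hg0 : g 0 = (A, B) := by
    simp only [g, T, abs_zero, add_zero, eP]
  have : (A, B) ∈ closure (closure H0) := by
    refine mem_closure_of_tendsto (f := g) (b := nhdsWithin 0 (Set.Ioi 0)) ?_ ?_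
    · rw [← hg0]; exact hg.continuousAt.tendsto.mono_left nhdsWithin_le_nhds
    · filter_upwards [self_mem_nhdsWithin] with ε hε
      have hε' : 0 < ε := hε
      -- the second eigenvector of the perturbed matrix replaces the second basis vector
      obtain ⟨k, hk⟩ : ∃ k, k = l + |ε| := ⟨_, rfl⟩
      have hk1 : 1 < k := by rw [hk, abs_of_pos hε']; linarith
      have hkk : k - k⁻¹ ≠ 0 := by
        have := inv_lt_one_of_one_lt₀ hk1
        linarith
      obtain ⟨a, ha⟩ : ∃ a, a = - s / (k - k⁻¹) := ⟨_, rfl⟩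
      have ha' : k * a + s = a * k⁻¹ := by
        rw [eq_div_iff hkk] at ha; linarith
      let U : Matrix (Fin 2) (Fin 2) ℝ := !![1, a; 0, 1]
      have hTU : T ε * U = U * !![k, 0; 0, k⁻¹] := by
        simp only [T, ← hk, U]
        ext i j; fin_cases i <;> fin_cases j <;> simp [Matrix.mul_apply, ha']
      have hQU : !![m, t; 0, m⁻¹] * U = U * !![m, m * a + t - a * m⁻¹; 0, m⁻¹] := by
        simp only [U]
        ext i j; fin_cases i <;> fin_cases j <;> simp [Matrix.mul_apply]
      refine weakCone_straight' (M := M * U) (P := !![k, 0; 0, k⁻¹])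
        (Q := !![m, m * a + t - a * m⁻¹; 0, m⁻¹]) ?_ ?_ ?_ ?_ ?_ ?_ ?_ ?_
      · rw [Matrix.det_mul]; simpa [U, Matrix.det_fin_two_of] using hM
      · rw [← Matrix.mul_assoc, conjSL_mul, Matrix.mul_assoc, hTU, Matrix.mul_assoc]
      · rw [← Matrix.mul_assoc, hB, Matrix.mul_assoc, hQU, Matrix.mul_assoc]
      · simp; linarith
      · simp; linarith
      · simp; linarith
      · simp; linarith
      · simpa using le_total _ _
  rwa [closure_closure] at this

/-! ### The trace characterisation of straight pairs -/

lemma exists_eigen {A : SL2} (h : 2 ≤ trace2 A) :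
    ∃ l : ℝ, 1 ≤ l ∧ l + l⁻¹ = trace2 A ∧ ∃ v : Fin 2 → ℝ, v ≠ 0 ∧
      (A : Matrix (Fin 2) (Fin 2) ℝ) *ᵥ v = l • v := by
  have hs : 0 ≤ trace2 A ^ 2 - 4 := by nlinarith
  obtain ⟨l, hl⟩ : ∃ l, l = (trace2 A + √(trace2 A ^ 2 - 4)) / 2 := ⟨_, rfl⟩
  have hl1 : 1 ≤ l := by have := Real.sqrt_nonneg (trace2 A ^ 2 - 4); linarith
  have hq : l ^ 2 - trace2 A * l + 1 = 0 := by
    rw [hl]; linear_combination (1 / 4) * Real.sq_sqrt hs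
  refine ⟨l, hl1, ?_, ?_⟩
  · field_simp; linear_combination hq
  · have hd : ((A : Matrix (Fin 2) (Fin 2) ℝ) - l • (1 : Matrix (Fin 2) (Fin 2) ℝ)).det = 0 := by
      have hdet := A.2
      rw [Matrix.det_fin_two] at hdet
      rw [Matrix.det_fin_two]
      simp [trace2, Matrix.trace_fin_two] at hq ⊢
      linear_combination hq + hdet
    obtain ⟨v, hv, e⟩ := Matrix.exists_mulVec_eq_zero_iff.2 hd
    refine ⟨v, hv, ?_⟩
    rw [Matrix.sub_mulVec, sub_eq_zero, Matrix.smul_mulVec, Matrix.one_mulVec] at e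
    exact e

/-- With `x = l + l⁻¹` and `y = m + m⁻¹`, the roots of `commDefect x y z` in `z` are
`l * m⁻¹ + m * l⁻¹` and `l * m + l⁻¹ * m⁻¹`, the former being the smaller one. -/
lemma lower_root {l m z : ℝ} (hl : 1 ≤ l) (hm : 1 ≤ m)
    (h : TraceStraight (l + l⁻¹) (m + m⁻¹) z) : l * m⁻¹ + m * l⁻¹ ≤ z := by
  by_contra! hlt
  have hl0 : l ≠ 0 := by positivity
  have hm0 : m ≠ 0 := by positivity
  have hl' : l⁻¹ ≤ 1 := inv_le_one_of_one_le₀ hl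
  have hm' : m⁻¹ ≤ 1 := inv_le_one_of_one_le₀ hm
  have e1 : l * l⁻¹ = 1 := mul_inv_cancel₀ hl0
  have e2 : m * m⁻¹ = 1 := mul_inv_cancel₀ hm0
  have hr : l * m⁻¹ + m * l⁻¹ ≤ l * m + l⁻¹ * m⁻¹ := by
    nlinarith [mul_nonneg (show 0 ≤ l - l⁻¹ by linarith) (show 0 ≤ m - m⁻¹ by linarith)]
  have hD : commDefect (l + l⁻¹) (m + m⁻¹) z =
      (l * m + l⁻¹ * m⁻¹ - z) * (l * m⁻¹ + m * l⁻¹ - z) := by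
    unfold commDefect
    linear_combination (2 - m ^ 2 - m⁻¹ ^ 2) * e1 + (2 - l ^ 2 - l⁻¹ ^ 2) * e2
  rcases h with h | h
  · rw [hD] at h
    nlinarith [mul_pos (show 0 < l * m + l⁻¹ * m⁻¹ - z by linarith)
      (show 0 < l * m⁻¹ + m * l⁻¹ - z by linarith)]
  · have hp : 0 < (l + l⁻¹) * (m + m⁻¹) := by positivity
    have : (l + l⁻¹) * (m + m⁻¹) ≤ 2 * z := by
      refine le_of_mul_le_mul_left ?_ hp
      linarith
    nlinarith

/-- Take eigenvectors `v` of `A` and `w` of `B` for the eigenvalues `l, m ≥ 1`. If they are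
independent then `A` and `B` become `!![l, p; 0, l⁻¹]` and `!![m⁻¹, 0; q, m]` in the basis `v, w`,
so that `tr AB = l * m⁻¹ + m * l⁻¹ + p * q`, and the hypothesis says exactly `0 ≤ p * q`. -/
lemma straight_of_TraceStraight_pos {A B : SL2} (hA : 2 ≤ trace2 A) (hB : 2 ≤ trace2 B)
    (h : TraceStraight (trace2 A) (trace2 B) (trace2 (A * B))) : Straight (A, B) := by
  obtain ⟨l, hl, hlA, v, hv, eA⟩ := exists_eigen hA
  obtain ⟨m, hm, hmB, w, hw, eB⟩ := exists_eigen hB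
  have a0 := congrFun eA 0
  have a1 := congrFun eA 1
  have b0 := congrFun eB 0
  have b1 := congrFun eB 1
  simp [Matrix.mulVec, dotProduct, Fin.sum_univ_two] at a0 a1 b0 b1
  have conj : ∀ {M : Matrix (Fin 2) (Fin 2) ℝ}, M.det ≠ 0 → ∀ C : SL2,
      ∃ R, (C : Matrix (Fin 2) (Fin 2) ℝ) * M = M * R := fun {M} hM C =>
    ⟨M⁻¹ * (C * M), (Matrix.mul_nonsing_inv_cancel_left _ _ (isUnit_iff_ne_zero.2 hM)).symm⟩
  have hinj : ∀ {M : Matrix (Fin 2) (Fin 2) ℝ}, M.det ≠ 0 → ∀ x y : ℝ,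
      M 0 0 * x + M 0 1 * y = 0 → M 1 0 * x + M 1 1 * y = 0 → x = 0 ∧ y = 0 := by
    intro M hM x y h1 h2
    rw [Matrix.det_fin_two] at hM
    constructor
    · apply (mul_eq_zero.1 (?_ : _ * x = 0)).resolve_left hM
      linear_combination M 1 1 * h1 - M 0 1 * h2
    · apply (mul_eq_zero.1 (?_ : _ * y = 0)).resolve_left hM
      linear_combination M 0 0 * h2 - M 1 0 * h1
  -- if a column of `M` is an eigenvector of `C`, the same column of `R` is diagonal
  have hcol : ∀ {M : Matrix (Fin 2) (Fin 2) ℝ}, M.det ≠ 0 → ∀ {C : SL2} {R k},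
      (C : Matrix (Fin 2) (Fin 2) ℝ) * M = M * R → C 0 0 * M 0 0 + C 0 1 * M 1 0 = k * M 0 0 →
      C 1 0 * M 0 0 + C 1 1 * M 1 0 = k * M 1 0 → R 0 0 = k ∧ R 1 0 = 0 := by
    intro M hM C R k hC h0 h1
    have c0 := congrFun (congrFun hC 0) 0
    have c1 := congrFun (congrFun hC 1) 0
    simp only [Matrix.mul_apply, Fin.sum_univ_two] at c0 c1
    obtain ⟨q1, q2⟩ := hinj hM (R 0 0 - k) (R 1 0) (by linear_combination h0 - c0)
      (by linear_combination h1 - c1)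
    exact ⟨by linarith, q2⟩
  have hcol' : ∀ {M : Matrix (Fin 2) (Fin 2) ℝ}, M.det ≠ 0 → ∀ {C : SL2} {R k},
      (C : Matrix (Fin 2) (Fin 2) ℝ) * M = M * R → C 0 0 * M 0 1 + C 0 1 * M 1 1 = k * M 0 1 →
      C 1 0 * M 0 1 + C 1 1 * M 1 1 = k * M 1 1 → R 1 1 = k ∧ R 0 1 = 0 := by
    intro M hM C R k hC h0 h1
    have c0 := congrFun (congrFun hC 0) 1
    have c1 := congrFun (congrFun hC 1) 1
    simp only [Matrix.mul_apply, Fin.sum_univ_two] at c0 c1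
    obtain ⟨q1, q2⟩ := hinj hM (R 0 1) (R 1 1 - k) (by linear_combination h0 - c0)
      (by linear_combination h1 - c1)
    exact ⟨by linarith, q1⟩
  by_cases hd : v 0 * w 1 - w 0 * v 1 = 0
  · -- `v` and `w` are parallel: complete `v` to a basis in which both matrices are triangular
    have hn : 0 < v 0 ^ 2 + v 1 ^ 2 := by
      by_contra hcon
      apply hv
      have h0 : v 0 = 0 := by nlinarith
      have h1 : v 1 = 0 := by nlinarith
      ext i; fin_cases i
      · exact h0
      · exact h1
    have hM : (!![v 0, - v 1; v 1, v 0] : Matrix (Fin 2) (Fin 2) ℝ).det ≠ 0 := by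
      rw [Matrix.det_fin_two_of]
      nlinarith
    obtain ⟨r, hr0, hr1⟩ : ∃ r, w 0 = r * v 0 ∧ w 1 = r * v 1 := by
      refine ⟨(v 0 * w 0 + v 1 * w 1) / (v 0 ^ 2 + v 1 ^ 2), ?_, ?_⟩
      · field_simp; linear_combination (-v 1) * hd
      · field_simp; linear_combination (v 0) * hd
    have hr : r ≠ 0 := by
      rintro rfl
      apply hw
      ext i; fin_cases i <;> simp [hr0, hr1]
    rw [hr0, hr1] at b0 b1
    obtain ⟨P, hP⟩ := conj hM A
    obtain ⟨Q, hQ⟩ := conj hM B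
    obtain ⟨p0, p1⟩ := hcol hM (k := l) hP (by simpa using a0) (by simpa using a1)
    obtain ⟨q0, q1⟩ := hcol hM (k := m) hQ
      (by simp; apply mul_left_cancel₀ hr; linear_combination b0)
      (by simp; apply mul_left_cancel₀ hr; linear_combination b1)
    have tP := trace_conj hM hP
    have tQ := trace_conj hM hQ
    change trace2 A = _ at tP
    change trace2 B = _ at tQ
    rw [Matrix.trace_fin_two, p0, ← hlA] at tP
    rw [Matrix.trace_fin_two, q0, ← hmB] at tQ
    refine triangular_straight hM (s := P 0 1) (t := Q 0 1) hl hm ?_ ?_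
    · rw [hP]; congr 1
      ext i j; fin_cases i <;> fin_cases j <;> simp [p0, p1]; linarith
    · rw [hQ]; congr 1
      ext i j; fin_cases i <;> fin_cases j <;> simp [q0, q1]; linarith
  · have hM : (!![v 0, w 0; v 1, w 1] : Matrix (Fin 2) (Fin 2) ℝ).det ≠ 0 := by
      rwa [Matrix.det_fin_two_of]
    obtain ⟨P, hP⟩ := conj hM A
    obtain ⟨Q, hQ⟩ := conj hM B
    obtain ⟨p0, p1⟩ := hcol hM (k := l) hP (by simpa using a0) (by simpa using a1)
    obtain ⟨q0, q1⟩ := hcol' hM (k := m) hQ (by simpa using b0) (by simpa using b1)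
    have hPQ : ((A * B : SL2) : Matrix (Fin 2) (Fin 2) ℝ) * !![v 0, w 0; v 1, w 1] =
        !![v 0, w 0; v 1, w 1] * (P * Q) := by
      rw [Matrix.SpecialLinearGroup.coe_mul, Matrix.mul_assoc, hQ, ← Matrix.mul_assoc, hP,
        Matrix.mul_assoc]
    have tP := trace_conj hM hP
    have tQ := trace_conj hM hQ
    have tPQ := trace_conj hM hPQ
    change trace2 A = _ at tP
    change trace2 B = _ at tQ
    change trace2 (A * B) = _ at tPQ
    rw [Matrix.trace_fin_two, p0, ← hlA] at tP
    rw [Matrix.trace_fin_two, q0, ← hmB] at tQ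
    have p2 : P 1 1 = l⁻¹ := by linarith
    have q2 : Q 0 0 = m⁻¹ := by linarith
    simp only [Matrix.trace_fin_two, Matrix.mul_apply, Fin.sum_univ_two, p0, p1, p2, q0, q1, q2]
      at tPQ
    have hz := lower_root hl hm (z := trace2 (A * B)) (by rw [hlA, hmB]; exact h)
    have hpq : 0 ≤ P 0 1 * Q 1 0 := by linarith
    refine weakCone_straight' hM hP hQ ?_ ?_ ?_ ?_ ?_
    · rw [p0]; linarith
    · rw [p2]; positivity
    · rw [q2]; positivity
    · rw [q0]; linarith
    · rw [p1, q1]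
      rcases mul_nonneg_iff.1 hpq with ⟨h1, h2⟩ | ⟨h1, h2⟩
      · exact Or.inl ⟨h1, le_rfl, le_rfl, h2⟩
      · exact Or.inr ⟨h1, le_rfl, le_rfl, h2⟩

lemma projAct_neg (A : SL2) : projAct (-A) = projAct A := by
  funext p
  induction p using Projectivization.ind with
  | h v hv =>
    obtain ⟨h1, e1⟩ := projAct_mk (-A) v hv
    obtain ⟨h2, e2⟩ := projAct_mk A v hv
    rw [e1, e2, Projectivization.mk_eq_mk_iff']
    refine ⟨-1, ?_⟩
    rw [Matrix.SpecialLinearGroup.coe_neg, Matrix.neg_mulVec, neg_one_smul]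

lemma trace2_neg (A : SL2) : trace2 (-A) = - trace2 A := by
  simp [trace2]

lemma straight_neg_left {A B : SL2} (h : Straight (-A, B)) : Straight (A, B) := by
  have := map_mem_closure (f := fun p : SL2 × SL2 => (-p.1, p.2)) (t := H0)
    ((continuous_negSL2.comp continuous_fst).prodMk continuous_snd) h (by
      rintro ⟨X, Y⟩ ⟨I, hI, hX, hY⟩
      exact ⟨I, hI, by rw [projAct_neg]; exact hX, hY⟩)
  simpa [Straight] using this

lemma straight_neg_right {A B : SL2} (h : Straight (A, -B)) : Straight (A, B) := by
  have := map_mem_closure (f := fun p : SL2 × SL2 => (p.1, -p.2)) (t := H0)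
    (continuous_fst.prodMk (continuous_negSL2.comp continuous_snd)) h (by
      rintro ⟨X, Y⟩ ⟨I, hI, hX, hY⟩
      exact ⟨I, hI, hX, by rw [projAct_neg]; exact hY⟩)
  simpa [Straight] using this

lemma straight_iff {A B : SL2} (hA : 2 ≤ |trace2 A|) (hB : 2 ≤ |trace2 B|) :
    Straight (A, B) ↔ TraceStraight (trace2 A) (trace2 B) (trace2 (A * B)) := by
  refine ⟨fun h => TraceStraight_of_straight (p := (A, B)) h, fun h => ?_⟩
  have step : ∀ A B : SL2, 2 ≤ trace2 A → 2 ≤ |trace2 B| →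
      TraceStraight (trace2 A) (trace2 B) (trace2 (A * B)) → Straight (A, B) := by
    intro A B hA hB h
    rcases le_abs'.1 hB with hB | hB
    · refine straight_neg_right (straight_of_TraceStraight_pos hA ?_ ?_)
      · rw [trace2_neg]; linarith
      · rw [mul_neg, trace2_neg, trace2_neg]; exact TraceStraight_neg_right.2 h
    · exact straight_of_TraceStraight_pos hA hB h
  rcases le_abs'.1 hA with hA | hA
  · refine straight_neg_left (step _ _ ?_ hB ?_)
    · rw [trace2_neg]; linarith
    · rw [neg_mul, trace2_neg, trace2_neg]; exact TraceStraight_neg_left.2 h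
  · exact step _ _ hA hB h

/-! ### The alternatives in trace coordinates -/

lemma trace2_mul_mul_left (A B : SL2) : trace2 (A * (A * B)) = trace2 A * trace2 (A * B) - trace2 B := by
  have hA := A.2
  rw [Matrix.det_fin_two] at hA
  simp only [trace2, Matrix.SpecialLinearGroup.coe_mul, Matrix.trace_fin_two, Matrix.mul_apply,
    Fin.sum_univ_two]
  linear_combination (-(B 0 0 + B 1 1)) * hA

lemma trace2_mul_mul_right (A B : SL2) : trace2 (B * A * B) = trace2 B * trace2 (A * B) - trace2 A := by
  have hB := B.2
  rw [Matrix.det_fin_two] at hB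
  simp only [trace2, Matrix.SpecialLinearGroup.coe_mul, Matrix.trace_fin_two, Matrix.mul_apply,
    Fin.sum_univ_two]
  linear_combination (-(A 0 0 + A 1 1)) * hB

lemma trace2_mul_comm (A B : SL2) : trace2 (B * A) = trace2 (A * B) := by
  simp only [trace2, Matrix.SpecialLinearGroup.coe_mul]
  exact Matrix.trace_mul_comm _ _

/-- Twistedness expressed through `x = tr A`, `y = tr B`, `z = tr AB`. -/
def TraceTwisted (x y z : ℝ) : Prop := 2 ≤ |x| ∧ 2 ≤ |y| ∧ ¬ TraceStraight x y z

lemma twisted_iff (A B : SL2) :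
    Twisted (A, B) ↔ TraceTwisted (trace2 A) (trace2 B) (trace2 (A * B)) := by
  unfold Twisted TraceTwisted
  constructor
  · rintro ⟨h1, h2, h3⟩
    exact ⟨h1, h2, fun h => h3 ((straight_iff h1 h2).2 h)⟩
  · rintro ⟨h1, h2, h3⟩
    exact ⟨h1, h2, fun h => h3 ((straight_iff h1 h2).1 h)⟩

lemma TraceTwisted_neg_left {x y z : ℝ} : TraceTwisted (-x) y (-z) ↔ TraceTwisted x y z := by
  unfold TraceTwisted; rw [TraceStraight_neg_left, abs_neg]
lemma TraceTwisted_neg_right {x y z : ℝ} : TraceTwisted x (-y) (-z) ↔ TraceTwisted x y z := by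
  unfold TraceTwisted; rw [TraceStraight_neg_right, abs_neg]

/-- The substance of the four alternatives in trace coordinates: `(A, AB)` has traces `x`, `z` and
product trace `x * z - y`, and `(BA, B)` has traces `z`, `y` and product trace `y * z - x`. -/
def Alternatives (x y z : ℝ) : Prop :=
  (TraceTwisted x z (x * z - y) ∨ TraceTwisted z y (y * z - x) ∨ x * y * z < 0 ∨ |z| < 2) ∧
    ¬(TraceTwisted x z (x * z - y) ∧ TraceTwisted z y (y * z - x)) ∧
    ¬(TraceTwisted x z (x * z - y) ∧ x * y * z < 0) ∧
    ¬(TraceTwisted z y (y * z - x) ∧ x * y * z < 0)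

lemma alternatives_neg_left {x y z : ℝ} : Alternatives (-x) y (-z) ↔ Alternatives x y z := by
  have e1 : TraceTwisted (-x) (-z) (-x * -z - y) ↔ TraceTwisted x z (x * z - y) := by
    rw [← TraceTwisted_neg_left, ← TraceTwisted_neg_right]; ring_nf
  have e2 : TraceTwisted (-z) y (y * -z - -x) ↔ TraceTwisted z y (y * z - x) := by
    rw [← TraceTwisted_neg_left]; ring_nf
  unfold Alternatives
  rw [e1, e2, abs_neg, show -x * y * -z = x * y * z by ring]

lemma alternatives_neg_right {x y z : ℝ} : Alternatives x (-y) (-z) ↔ Alternatives x y z := by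
  have e1 : TraceTwisted x (-z) (x * -z - -y) ↔ TraceTwisted x z (x * z - y) := by
    rw [← TraceTwisted_neg_right]; ring_nf
  have e2 : TraceTwisted (-z) (-y) (-y * -z - x) ↔ TraceTwisted z y (y * z - x) := by
    rw [← TraceTwisted_neg_left, ← TraceTwisted_neg_right]; ring_nf
  unfold Alternatives
  rw [e1, e2, abs_neg, show x * -y * -z = x * y * z by ring]

/-- `commDefect` is invariant under both moves, so for `z ≥ 2` the pair `(A, AB)` is twisted exactly
when `x * z < 2 * y`, and `(BA, B)` exactly when `y * z < 2 * x`. Both together would give `z < 2`;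
if neither holds, then `commDefect x y z ≤ 0`, contradicting twistedness. -/
lemma alternatives_pos {x y z : ℝ} (hx : 2 ≤ x) (hy : 2 ≤ y) (h : ¬ TraceStraight x y z) :
    Alternatives x y z := by
  have hD : 0 < commDefect x y z := not_le.1 fun h' => h (Or.inl h')
  have hz : 2 * (x * y * z) < (x * y) ^ 2 := not_le.1 fun h' => h (Or.inr h')
  have hxy : 0 < x * y := by positivity
  have hz' : 2 * z < x * y := by
    refine lt_of_mul_lt_mul_left ?_ hxy.le
    linarith
  have D1 : commDefect x z (x * z - y) = commDefect x y z := by unfold commDefect; ring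
  have D2 : commDefect z y (y * z - x) = commDefect x y z := by unfold commDefect; ring
  have t1 : TraceTwisted x z (x * z - y) ↔ 2 ≤ |z| ∧ (x * z) * (x * z - 2 * y) < 0 := by
    unfold TraceTwisted TraceStraight
    rw [D1, abs_of_nonneg (by linarith : 0 ≤ x)]
    constructor
    · rintro ⟨-, h2, h3⟩
      push Not at h3
      exact ⟨h2, by linarith [h3.2]⟩
    · rintro ⟨h2, h3⟩
      refine ⟨hx, h2, ?_⟩
      push Not
      exact ⟨hD, by linarith⟩
  have t2 : TraceTwisted z y (y * z - x) ↔ 2 ≤ |z| ∧ (y * z) * (y * z - 2 * x) < 0 := by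
    unfold TraceTwisted TraceStraight
    rw [D2, abs_of_nonneg (by linarith : 0 ≤ y)]
    constructor
    · rintro ⟨h2, -, h3⟩
      push Not at h3
      exact ⟨h2, by linarith [h3.2]⟩
    · rintro ⟨h2, h3⟩
      refine ⟨h2, hy, ?_⟩
      push Not
      exact ⟨hD, by linarith⟩
  -- a negative `z` excludes that `(A, AB)` or `(BA, B)` is twisted
  have n1 : z < 0 → 0 < (x * z) * (x * z - 2 * y) := fun hz => by
    have : x * z < 0 := mul_neg_of_pos_of_neg (by linarith) hz
    exact mul_pos_of_neg_of_neg this (by linarith)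
  have n2 : z < 0 → 0 < (y * z) * (y * z - 2 * x) := fun hz => by
    have : y * z < 0 := mul_neg_of_pos_of_neg (by linarith) hz
    exact mul_pos_of_neg_of_neg this (by linarith)
  have n3 : x * y * z < 0 ↔ z < 0 := by
    constructor
    · intro h'; by_contra! hc; have := mul_nonneg hxy.le hc; linarith
    · exact mul_neg_of_pos_of_neg hxy
  unfold Alternatives
  rw [t1, t2, n3]
  refine ⟨?_, ?_, ?_, ?_⟩
  · by_contra! hcon
    obtain ⟨h1, h2, h3, h4⟩ := hcon
    have hz2 : 2 ≤ z := by rwa [abs_of_nonneg h3] at h4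
    have g1 := h1 h4
    have g2 := h2 h4
    have k1 : 2 * y ≤ x * z := by
      have := nonneg_of_mul_nonneg_right g1 (by positivity); linarith
    have k2 : 2 * x ≤ y * z := by
      have := nonneg_of_mul_nonneg_right g2 (by positivity); linarith
    -- the largest of the three traces is at most half the product of the other two
    have : commDefect x y z ≤ 0 := by
      rcases le_total y x with a | a <;> rcases le_total z x with b | b <;>
        rcases le_total y z with c | c
      · exact commDefect_nonpos_of_max hx hy hz2 a b k2
      · exact commDefect_nonpos_of_max hx hy hz2 a b k2
      · have := commDefect_nonpos_of_max hz2 hx hy b c (by linarith); unfold commDefect at this ⊢; linarith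
      · have := commDefect_nonpos_of_max hz2 hx hy b (by linarith) (by linarith); unfold commDefect at this ⊢; linarith
      · have := commDefect_nonpos_of_max hz2 hx hy (by linarith) c (by linarith); unfold commDefect at this ⊢; linarith
      · have := commDefect_nonpos_of_max hy hx hz2 a c (by linarith); unfold commDefect at this ⊢; linarith
      · have := commDefect_nonpos_of_max hz2 hx hy b c (by linarith); unfold commDefect at this ⊢; linarith
      · have := commDefect_nonpos_of_max hy hx hz2 a c (by linarith); unfold commDefect at this ⊢; linarith
    linarith
  · rintro ⟨⟨h4, h1⟩, -, h2⟩
    rcases le_or_gt 0 z with h0 | h0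
    · have hz2 : 2 ≤ z := by rwa [abs_of_nonneg h0] at h4
      have k1 : x * z < 2 * y := by
        by_contra! hc
        have := mul_nonneg (show 0 ≤ x * z by positivity) (sub_nonneg.2 hc); linarith
      have k2 : y * z < 2 * x := by
        by_contra! hc
        have := mul_nonneg (show 0 ≤ y * z by positivity) (sub_nonneg.2 hc); linarith
      nlinarith
    · linarith [n1 h0]
  · rintro ⟨⟨-, h1⟩, h0⟩; linarith [n1 h0]
  · rintro ⟨⟨-, h1⟩, h0⟩; linarith [n2 h0]

lemma alternatives_of_twisted {x y z : ℝ} (h : TraceTwisted x y z) : Alternatives x y z := by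
  obtain ⟨hx, hy, h⟩ := h
  have step : ∀ {x y z : ℝ}, 2 ≤ x → 2 ≤ |y| → ¬ TraceStraight x y z → Alternatives x y z := by
    intro x y z hx hy h
    rcases le_abs'.1 hy with hy | hy
    · exact alternatives_neg_right.1
        (alternatives_pos hx (by linarith) (fun h' => h (TraceStraight_neg_right.1 h')))
    · exact alternatives_pos hx hy h
  rcases le_abs'.1 hx with hx | hx
  · exact alternatives_neg_left.1
      (step (by linarith) hy (fun h' => h (TraceStraight_neg_left.1 h')))
  · exact step hx hy h

/-- **The four alternatives for a twisted pair** (Lemma 3.12 of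
Avila–Bochi–Yoccoz): exactly one of `(A,AB)` twisted, `(BA,B)` twisted,
`(A,B)` free, or `AB` elliptic holds. -/
theorem twisted_alternatives (A B : SL2) (h : Twisted (A, B)) :
    (Twisted (A, A * B) ∨ Twisted (B * A, B) ∨ FreePair (A, B) ∨
      |trace2 (A * B)| < 2) ∧
    ¬(Twisted (A, A * B) ∧ Twisted (B * A, B)) ∧
    ¬(Twisted (A, A * B) ∧ FreePair (A, B)) ∧
    ¬(Twisted (A, A * B) ∧ |trace2 (A * B)| < 2) ∧
    ¬(Twisted (B * A, B) ∧ FreePair (A, B)) ∧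
    ¬(Twisted (B * A, B) ∧ |trace2 (A * B)| < 2) ∧
    ¬(FreePair (A, B) ∧ |trace2 (A * B)| < 2) := by
  have hT := (twisted_iff A B).1 h
  obtain ⟨h1, h2, h3, h4⟩ := alternatives_of_twisted hT
  have e1 := twisted_iff A (A * B)
  have e2 := twisted_iff (B * A) B
  rw [trace2_mul_mul_left] at e1
  rw [trace2_mul_mul_right, trace2_mul_comm] at e2
  rw [← e1, ← e2] at h1 h2
  rw [← e1] at h3
  rw [← e2] at h4
  refine ⟨?_, h2, fun hh => h3 ⟨hh.1, hh.2.2.2.2⟩, fun hh => not_lt.2 hh.1.2.1 hh.2,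
    fun hh => h4 ⟨hh.1, hh.2.2.2.2⟩, fun hh => ?_, fun hh => not_lt.2 hh.1.2.2.1 hh.2⟩
  · rcases h1 with h1 | h1 | h1 | h1
    · exact Or.inl h1
    · exact Or.inr (Or.inl h1)
    · rcases lt_or_ge |trace2 (A * B)| 2 with h5 | h5
      · exact Or.inr (Or.inr (Or.inr h5))
      · exact Or.inr (Or.inr (Or.inl ⟨hT.1, hT.2.1, h5, h1⟩))
    · exact Or.inr (Or.inr (Or.inr h1))
  · have := hh.1.1
    simp only [trace2_mul_comm] at this
    exact not_lt.2 this hh.2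
end

section
/- Let (A,B) ∈ SL(2,ℝ)² be almost hyperbolic and twisted. Then there exists exactly one finite sequence (ε₁,…,ε_k) ∈ {+,−}^k (k ≥ 0) such that F_{ε_k}∘⋯∘F_{ε₁}(A,B) is free; moreover its length satisfies k ≤ (|tr A| + |tr B|)/4 − 1. -/
/-!
Let `x`, `y`, `z` be the traces of `A`, `B`, `A * B`, and let `κ = x² + y² + z² - x y z - 4`, which
equals `tr [A, B] - 2` and is invariant under `F₊` and `F₋`.

Geometry enters only through `twisted_traces`: a twisted pair satisfies `κ > 0` and
`x y (2 z - x y) < 0`. Equivalently, if `|x|, |y| ≥ 2` and one of these inequalities fails, then the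
pair is straight. When `A` is hyperbolic, in an eigenbasis of `A` the failure of the inequalities is
a condition on the entries of `B` under which an explicit closed cone is preserved by both matrices,
up to sign (`straight_of_hyperbolic`); a pair weakly preserving a cone is a limit of pairs strictly
preserving it (`straight_of_cone`). When both matrices have trace `±2`, perturbing one of them to a
hyperbolic matrix while keeping `x y (2 z - x y) ≥ 0` reduces to the former case
(`straight_of_parabolic`).

The rest concerns trace triples, on which the generators act by `(x, y, z) ↦ (x, z, x z - y)` and
`(x, y, z) ↦ (z, y, z y - x)`. Changing the signs of `A` and `B` one may assume `x, y ≥ 2`. Then the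
pair is free exactly when `z ≤ -2`. Otherwise `z ≥ 2`, and replacing the larger of `x`, `y` by `z`
gives a triple with the same properties (`descent_twisted`), the larger trace dropping by at least
`√κ` (`descent_gap`), so that the process stops. Replacing the smaller one instead, or moving on from
a free pair, leads to `CoherentTriple`, a condition which is stable and excludes freeness; this gives
uniqueness. Following the descent backwards from its end, where `z ≤ -2`, shows that each step in
fact decreases `x + y` by at least `4`; since `x + y ≥ 4` at the end, the bound on the length follows
(`descent`).
-/


open Matrix

/-! ### Invariant cones and straight pairs -/

/-- The product of the two coordinates of `u` in the basis formed by the columns of `g`. -/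
noncomputable def coordProd (g : Matrix (Fin 2) (Fin 2) ℝ) (u : Fin 2 → ℝ) : ℝ :=
  (g⁻¹ *ᵥ u) 0 * (g⁻¹ *ᵥ u) 1

lemma coordProd_smul (g : Matrix (Fin 2) (Fin 2) ℝ) (r : ℝ) (u : Fin 2 → ℝ) :
    coordProd g (r • u) = r ^ 2 * coordProd g u := by
  simp only [coordProd, Matrix.mulVec_smul, Pi.smul_apply, smul_eq_mul]
  ring

lemma continuous_coordProd (g : Matrix (Fin 2) (Fin 2) ℝ) : Continuous (coordProd g) := by
  unfold coordProd
  fun_prop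

/-- The representative chosen in `Projectivization.rep` changes `coordProd` by a positive factor. -/
lemma coordProd_rep (g : Matrix (Fin 2) (Fin 2) ℝ) (v : Fin 2 → ℝ) (hv : v ≠ 0) :
    ∃ r : ℝ, 0 < r ∧ coordProd g (Projectivization.mk ℝ v hv).rep = r * coordProd g v := by
  obtain ⟨a, ha⟩ := Projectivization.exists_smul_eq_mk_rep ℝ v hv
  refine ⟨(a : ℝ) ^ 2, by have := a.ne_zero; positivity, ?_⟩
  rw [← ha, Units.smul_def, coordProd_smul]

/-- The projective interval of directions lying in the open cone spanned by the columns of `g`. -/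
noncomputable def coneInterval (g : Matrix (Fin 2) (Fin 2) ℝ) : Set P1 :=
  {p | 0 < coordProd g p.rep}

lemma mk_mem_coneInterval (g : Matrix (Fin 2) (Fin 2) ℝ) (v : Fin 2 → ℝ) (hv : v ≠ 0) :
    Projectivization.mk ℝ v hv ∈ coneInterval g ↔ 0 < coordProd g v := by
  obtain ⟨r, hr, h⟩ := coordProd_rep g v hv
  simp only [coneInterval, Set.mem_ofPred_eq, h, mul_pos_iff_of_pos_left hr]

lemma isOpen_coneInterval (g : Matrix (Fin 2) (Fin 2) ℝ) : IsOpen (coneInterval g) := by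
  have h : IsOpen {v : {v : Fin 2 → ℝ // v ≠ 0} | 0 < coordProd g v.1} :=
    isOpen_lt continuous_const ((continuous_coordProd g).comp continuous_subtype_val)
  change IsOpen {v : {v : Fin 2 → ℝ // v ≠ 0} | Projectivization.mk ℝ v.1 v.2 ∈ coneInterval g}
  simpa only [mk_mem_coneInterval] using h

lemma closure_coneInterval (g : Matrix (Fin 2) (Fin 2) ℝ) :
    closure (coneInterval g) ⊆ {p | 0 ≤ coordProd g p.rep} := by
  refine closure_minimal (fun p (hp : 0 < coordProd g p.rep) =>
    show 0 ≤ coordProd g p.rep from hp.le) ?_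
  rw [← isOpen_compl_iff]
  have h : IsOpen {v : {v : Fin 2 → ℝ // v ≠ 0} | coordProd g v.1 < 0} :=
    isOpen_lt ((continuous_coordProd g).comp continuous_subtype_val) continuous_const
  change IsOpen {v : {v : Fin 2 → ℝ // v ≠ 0} |
    Projectivization.mk ℝ v.1 v.2 ∈ {p : P1 | 0 ≤ coordProd g p.rep}ᶜ}
  convert h using 3 with v
  obtain ⟨r, hr, h'⟩ := coordProd_rep g v.1 v.2
  simp only [Set.mem_compl_iff, Set.mem_ofPred_eq, h', not_le]
  constructor
  · intro h; by_contra! h2; nlinarith [mul_nonneg hr.le h2]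
  · intro h; exact mul_neg_of_pos_of_neg hr h

lemma isOpenInterval_coneInterval (g : Matrix (Fin 2) (Fin 2) ℝ) (hg : g.det ≠ 0) :
    IsOpenInterval (coneInterval g) := by
  have hu : IsUnit g.det := isUnit_iff_ne_zero.mpr hg
  have hinv : ∀ w : Fin 2 → ℝ, g⁻¹ *ᵥ (g *ᵥ w) = w := fun w => by
    rw [Matrix.mulVec_mulVec, Matrix.nonsing_inv_mul g hu, Matrix.one_mulVec]
  have hinv' : ∀ w : Fin 2 → ℝ, g *ᵥ (g⁻¹ *ᵥ w) = w := fun w => by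
    rw [Matrix.mulVec_mulVec, Matrix.mul_nonsing_inv g hu, Matrix.one_mulVec]
  have hne : ∀ w : Fin 2 → ℝ, w ≠ 0 → g *ᵥ w ≠ 0 := fun w hw h => hw (by
    rw [← hinv w, h, Matrix.mulVec_zero])
  have hcp : ∀ w : Fin 2 → ℝ, coordProd g (g *ᵥ w) = w 0 * w 1 := fun w => by
    rw [coordProd, hinv]
  refine ⟨isOpen_coneInterval g, ?_, ?_⟩
  · -- the interval is the image of the convex open quadrant under a continuous map
    let C : Set (Fin 2 → ℝ) := Set.pi Set.univ (fun _ => Set.Ioi 0)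
    have hC : IsConnected C := by
      refine Convex.isConnected (convex_pi fun i _ => convex_Ioi 0) ⟨fun _ => 1, fun i _ => ?_⟩
      simp
    have hC0 : ∀ w : C, w.1 ≠ 0 := fun w h => by
      have := w.2 0 (Set.mem_univ _)
      simp [h] at this
    let f : C → {v : Fin 2 → ℝ // v ≠ 0} := fun w => ⟨g *ᵥ w.1, hne _ (hC0 w)⟩
    have hf : Continuous f := by
      refine Continuous.subtype_mk ?_ _
      fun_prop
    have hq : Continuous (fun v : {v : Fin 2 → ℝ // v ≠ 0} => (Projectivization.mk ℝ v.1 v.2 : P1)) :=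
      continuous_quotient_mk'
    have : ConnectedSpace C := isConnected_iff_connectedSpace.mp hC
    have hr := isConnected_range (hq.comp hf)
    convert hr using 1
    ext p
    induction p using Projectivization.ind with
    | h v hv =>
      rw [mk_mem_coneInterval]
      constructor
      · intro h
        -- both coordinates have the same sign, so `v` or `-v` lies in the cone
        have key : ∃ r : ℝ, r ≠ 0 ∧ 0 < r * (g⁻¹ *ᵥ v) 0 ∧ 0 < r * (g⁻¹ *ᵥ v) 1 := by
          rcases mul_pos_iff.mp h with ⟨h0, h1⟩ | ⟨h0, h1⟩
          · exact ⟨1, by norm_num, by linarith, by linarith⟩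
          · exact ⟨-1, by norm_num, by linarith, by linarith⟩
        obtain ⟨r, hr0, h0, h1⟩ := key
        refine ⟨⟨r • (g⁻¹ *ᵥ v), ?_⟩, ?_⟩
        · intro i _
          fin_cases i
          · simpa using h0
          · simpa using h1
        · simp only [Function.comp, f, Matrix.mulVec_smul, hinv']
          rw [Projectivization.mk_eq_mk_iff']
          exact ⟨r, rfl⟩
      · rintro ⟨w, hw⟩
        rw [← mk_mem_coneInterval g v hv, ← hw]
        simp only [Function.comp, f, mk_mem_coneInterval, hcp]
        exact mul_pos (w.2 0 (Set.mem_univ _)) (w.2 1 (Set.mem_univ _))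
  · have h0 : (![1, 0] : Fin 2 → ℝ) ≠ 0 := fun h => by simpa using congrFun h 0
    have h1 : (![0, 1] : Fin 2 → ℝ) ≠ 0 := fun h => by simpa using congrFun h 1
    refine ⟨Projectivization.mk ℝ _ (hne _ h0), ?_, Projectivization.mk ℝ _ (hne _ h1), ?_, ?_⟩
    · rw [Set.mem_compl_iff, mk_mem_coneInterval, hcp]
      simp
    · rw [Set.mem_compl_iff, mk_mem_coneInterval, hcp]
      simp
    · rw [Ne, Projectivization.mk_eq_mk_iff']
      rintro ⟨a, ha⟩
      rw [← Matrix.mulVec_smul] at ha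
      have h := congrArg (fun w => g⁻¹ *ᵥ w) ha
      simp only [hinv] at h
      simpa using congrFun h 0

/-- A matrix which in the basis `g` has all entries of one strict sign contracts the cone of `g`. -/
lemma image_coneInterval (A : SL2) (g P : Matrix (Fin 2) (Fin 2) ℝ) (hg : g.det ≠ 0)
    (hA : (A : Matrix (Fin 2) (Fin 2) ℝ) * g = g * P) (σ : ℝ) (hP : ∀ i j, 0 < σ * P i j) :
    projAct A '' closure (coneInterval g) ⊆ coneInterval g := by
  have hu : IsUnit g.det := isUnit_iff_ne_zero.mpr hg
  rintro _ ⟨p, hp, rfl⟩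
  have hp' := closure_coneInterval g hp
  induction p using Projectivization.ind with
  | h v hv =>
    obtain ⟨r, hr, h'⟩ := coordProd_rep g v hv
    simp only [Set.mem_ofPred_eq, h', mul_nonneg_iff_of_pos_left hr] at hp'
    rw [projAct, Projectivization.map_mk, mk_mem_coneInterval]
    change 0 < coordProd g ((A : Matrix (Fin 2) (Fin 2) ℝ) *ᵥ v)
    obtain ⟨w, rfl⟩ : ∃ w, v = g *ᵥ w := ⟨g⁻¹ *ᵥ v, by
      rw [Matrix.mulVec_mulVec, Matrix.mul_nonsing_inv g hu, Matrix.one_mulVec]⟩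
    have hinv : ∀ w : Fin 2 → ℝ, g⁻¹ *ᵥ (g *ᵥ w) = w := fun w => by
      rw [Matrix.mulVec_mulVec, Matrix.nonsing_inv_mul g hu, Matrix.one_mulVec]
    rw [coordProd, hinv] at hp'
    rw [Matrix.mulVec_mulVec, hA, ← Matrix.mulVec_mulVec, coordProd, hinv]
    have hw : w 0 ≠ 0 ∨ w 1 ≠ 0 := by
      by_contra! h
      apply hv
      have : w = 0 := by ext i; fin_cases i <;> simp [h]
      rw [this, Matrix.mulVec_zero]
    simp only [Matrix.mulVec, dotProduct, Fin.sum_univ_two]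
    have hσ : σ ≠ 0 := by rintro rfl; simpa using hP 0 0
    have h00 := hP 0 0
    have h01 := hP 0 1
    have h10 := hP 1 0
    have h11 := hP 1 1
    have hsq : 0 < w 0 ^ 2 ∨ 0 < w 1 ^ 2 := by
      rcases hw with h | h
      · left; positivity
      · right; positivity
    have key : 0 < σ ^ 2 * ((P 0 0 * w 0 + P 0 1 * w 1) * (P 1 0 * w 0 + P 1 1 * w 1)) := by
      have e : σ ^ 2 * ((P 0 0 * w 0 + P 0 1 * w 1) * (P 1 0 * w 0 + P 1 1 * w 1))
        = (σ * P 0 0) * (σ * P 1 0) * w 0 ^ 2 + (σ * P 0 1) * (σ * P 1 1) * w 1 ^ 2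
          + ((σ * P 0 0) * (σ * P 1 1) + (σ * P 0 1) * (σ * P 1 0)) * (w 0 * w 1) := by ring
      rw [e]
      rcases hsq with h | h <;> positivity
    exact (mul_pos_iff_of_pos_left (by positivity)).mp key

lemma mem_H0_of_cone (A B : SL2) (g P Q : Matrix (Fin 2) (Fin 2) ℝ) (hg : g.det ≠ 0)
    (hA : (A : Matrix (Fin 2) (Fin 2) ℝ) * g = g * P)
    (hB : (B : Matrix (Fin 2) (Fin 2) ℝ) * g = g * Q)
    (σ τ : ℝ) (hP : ∀ i j, 0 < σ * P i j) (hQ : ∀ i j, 0 < τ * Q i j) : (A, B) ∈ H0 :=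
  ⟨coneInterval g, isOpenInterval_coneInterval g hg, image_coneInterval A g P hg hA σ hP,
    image_coneInterval B g Q hg hB τ hQ⟩

/-- Left multiplication by the matrix of determinant one whose expression in the basis `g` is
`!![1, ε; ε, 1 + ε ^ 2]`: for `ε > 0` it turns weak invariance of the cone into strict
invariance. -/
noncomputable def nudge (g : Matrix (Fin 2) (Fin 2) ℝ) (hg : g.det ≠ 0) (ε : ℝ) (A : SL2) : SL2 :=
  ⟨g * !![1, ε; ε, 1 + ε ^ 2] * g⁻¹ * A, by
    have hu : IsUnit g.det := isUnit_iff_ne_zero.mpr hg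
    rw [Matrix.det_mul, Matrix.det_conj ((Matrix.isUnit_iff_isUnit_det g).mpr hu), A.2,
      Matrix.det_fin_two_of]
    ring⟩

lemma nudge_zero (g : Matrix (Fin 2) (Fin 2) ℝ) (hg : g.det ≠ 0) (A : SL2) :
    nudge g hg 0 A = A := by
  have hu : IsUnit g.det := isUnit_iff_ne_zero.mpr hg
  apply Subtype.ext
  have : (!![1, 0; 0, 1 + 0 ^ 2] : Matrix (Fin 2) (Fin 2) ℝ) = 1 := by
    ext i j; fin_cases i <;> fin_cases j <;> simp
  change g * !![1, 0; 0, 1 + 0 ^ 2] * g⁻¹ * (A : Matrix (Fin 2) (Fin 2) ℝ) =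
    (A : Matrix (Fin 2) (Fin 2) ℝ)
  rw [this, Matrix.mul_one, Matrix.mul_nonsing_inv g hu, Matrix.one_mul]

lemma continuous_nudge (g : Matrix (Fin 2) (Fin 2) ℝ) (hg : g.det ≠ 0) (A : SL2) :
    Continuous fun ε => nudge g hg ε A := by
  refine Continuous.subtype_mk (p := fun M : Matrix (Fin 2) (Fin 2) ℝ => M.det = 1) ?_ _
  have : Continuous fun ε : ℝ => (!![1, ε; ε, 1 + ε ^ 2] : Matrix (Fin 2) (Fin 2) ℝ) := by
    refine continuous_matrix fun i j => ?_
    fin_cases i <;> fin_cases j <;> simp <;> fun_prop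
  exact ((continuous_const.matrix_mul this).matrix_mul continuous_const).matrix_mul
    continuous_const

lemma nudge_conj (g P : Matrix (Fin 2) (Fin 2) ℝ) (hg : g.det ≠ 0) (ε : ℝ) (A : SL2)
    (hA : (A : Matrix (Fin 2) (Fin 2) ℝ) * g = g * P) :
    (nudge g hg ε A : Matrix (Fin 2) (Fin 2) ℝ) * g = g * (!![1, ε; ε, 1 + ε ^ 2] * P) := by
  have hu : IsUnit g.det := isUnit_iff_ne_zero.mpr hg
  change g * !![1, ε; ε, 1 + ε ^ 2] * g⁻¹ * (A : Matrix (Fin 2) (Fin 2) ℝ) * g = _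
  rw [Matrix.mul_assoc, hA, Matrix.mul_assoc, ← Matrix.mul_assoc g⁻¹, Matrix.nonsing_inv_mul g hu,
    Matrix.one_mul, Matrix.mul_assoc]

lemma det_eq_one_of_conj (A : SL2) (g P : Matrix (Fin 2) (Fin 2) ℝ) (hg : g.det ≠ 0)
    (hA : (A : Matrix (Fin 2) (Fin 2) ℝ) * g = g * P) : P.det = 1 := by
  have h := congrArg Matrix.det hA
  rw [Matrix.det_mul, Matrix.det_mul, A.2, one_mul] at h
  exact mul_left_cancel₀ hg (by rw [← h, mul_one])

lemma nudge_pos (P : Matrix (Fin 2) (Fin 2) ℝ) (hdet : P.det = 1) (σ ε : ℝ) (hε : 0 < ε)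
    (hσ : σ ≠ 0) (hP : ∀ i j, 0 ≤ σ * P i j) (i j : Fin 2) :
    0 < σ * (!![1, ε; ε, 1 + ε ^ 2] * P) i j := by
  rw [Matrix.det_fin_two] at hdet
  -- no column of `P` vanishes
  have hcol : ∀ j, P 0 j ≠ 0 ∨ P 1 j ≠ 0 := by
    intro j
    by_contra! h
    fin_cases j <;> simp_all
  have h0 := hP 0 j
  have h1 := hP 1 j
  have hpos : 0 < σ * P 0 j ∨ 0 < σ * P 1 j := by
    rcases hcol j with h | h
    · exact Or.inl (lt_of_le_of_ne h0 (mul_ne_zero hσ h).symm)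
    · exact Or.inr (lt_of_le_of_ne h1 (mul_ne_zero hσ h).symm)
  have e0 : σ * (!![1, ε; ε, 1 + ε ^ 2] * P) 0 j = σ * P 0 j + ε * (σ * P 1 j) := by
    simp [Matrix.mul_apply, Fin.sum_univ_two]; ring
  have e1 : σ * (!![1, ε; ε, 1 + ε ^ 2] * P) 1 j
      = ε * (σ * P 0 j) + (1 + ε ^ 2) * (σ * P 1 j) := by
    simp [Matrix.mul_apply, Fin.sum_univ_two]; ring
  fin_cases i
  · refine lt_of_lt_of_eq ?_ e0.symm
    rcases hpos with h | h <;> positivity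
  · refine lt_of_lt_of_eq ?_ e1.symm
    rcases hpos with h | h <;> positivity

/-- A pair weakly preserving the cone spanned by the columns of `g` is straight. -/
lemma straight_of_cone (A B : SL2) (g P Q : Matrix (Fin 2) (Fin 2) ℝ) (hg : g.det ≠ 0)
    (hA : (A : Matrix (Fin 2) (Fin 2) ℝ) * g = g * P)
    (hB : (B : Matrix (Fin 2) (Fin 2) ℝ) * g = g * Q)
    (σ τ : ℝ) (hσ : σ ≠ 0) (hτ : τ ≠ 0)
    (hP : ∀ i j, 0 ≤ σ * P i j) (hQ : ∀ i j, 0 ≤ τ * Q i j) : Straight (A, B) := by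
  have hlim : Filter.Tendsto (fun ε : ℝ => (nudge g hg ε A, nudge g hg ε B))
      (nhdsWithin 0 (Set.Ioi 0)) (nhds (A, B)) := by
    have h := ((continuous_nudge g hg A).prodMk (continuous_nudge g hg B)).tendsto 0
    simp only [nudge_zero] at h
    exact h.mono_left nhdsWithin_le_nhds
  refine mem_closure_of_tendsto hlim ?_
  filter_upwards [self_mem_nhdsWithin] with ε hε
  exact mem_H0_of_cone _ _ g _ _ hg (nudge_conj g P hg ε A hA) (nudge_conj g Q hg ε B hB) σ τ
    (nudge_pos P (det_eq_one_of_conj A g P hg hA) σ ε hε hσ hP)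
    (nudge_pos Q (det_eq_one_of_conj B g Q hg hB) τ ε hε hτ hQ)

/-! ### Normal forms in suitable bases -/

lemma straight_swap {A B : SL2} (h : Straight (B, A)) : Straight (A, B) := by
  have hmaps : Set.MapsTo (Prod.swap : SL2 × SL2 → SL2 × SL2) H0 H0 := by
    rintro ⟨a, b⟩ ⟨I, hI, h1, h2⟩
    exact ⟨I, hI, h2, h1⟩
  have hcl := map_mem_closure continuous_swap h hmaps
  exact hcl

/-- Expression of an element of `SL(2,ℝ)` in the basis formed by the columns of `g`. -/
lemma exists_conj (B : SL2) (g : Matrix (Fin 2) (Fin 2) ℝ) (hg : g.det ≠ 0) :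
    ∃ a b c d : ℝ, (B : Matrix (Fin 2) (Fin 2) ℝ) * g = g * !![a, b; c, d] ∧
      a * d - b * c = 1 := by
  have hu : IsUnit g.det := isUnit_iff_ne_zero.mpr hg
  have h : (B : Matrix (Fin 2) (Fin 2) ℝ) * g
      = g * (g⁻¹ * (B : Matrix (Fin 2) (Fin 2) ℝ) * g) := by
    rw [Matrix.mul_assoc, ← Matrix.mul_assoc g, Matrix.mul_nonsing_inv g hu, Matrix.one_mul]
  have hd := det_eq_one_of_conj B g _ hg h
  set Q := g⁻¹ * (B : Matrix (Fin 2) (Fin 2) ℝ) * g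
  refine ⟨Q 0 0, Q 0 1, Q 1 0, Q 1 1, ?_, ?_⟩
  · rw [← Matrix.eta_fin_two]
    exact h
  · rw [Matrix.det_fin_two] at hd
    exact hd

lemma trace_of_conj (M g P : Matrix (Fin 2) (Fin 2) ℝ) (hg : g.det ≠ 0)
    (hA : M * g = g * P) : M.trace = P.trace := by
  have hu : IsUnit g.det := isUnit_iff_ne_zero.mpr hg
  have : M = g * P * g⁻¹ := by
    rw [← hA, Matrix.mul_assoc, Matrix.mul_nonsing_inv g hu, Matrix.mul_one]
  rw [this, Matrix.trace_mul_cycle, Matrix.nonsing_inv_mul g hu, Matrix.one_mul]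

/-- A real root of the characteristic polynomial has an eigenvector. -/
lemma exists_eigenvector (A : SL2) (l : ℝ) (hl : l ^ 2 - trace2 A * l + 1 = 0) :
    ∃ v : Fin 2 → ℝ, v ≠ 0 ∧ (A : Matrix (Fin 2) (Fin 2) ℝ) *ᵥ v = l • v := by
  have hd := A.2
  rw [Matrix.det_fin_two] at hd
  rw [trace2, Matrix.trace_fin_two] at hl
  have : ((A : Matrix (Fin 2) (Fin 2) ℝ) - l • (1 : Matrix (Fin 2) (Fin 2) ℝ)).det = 0 := by
    rw [Matrix.det_fin_two]
    simp
    linarith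
  obtain ⟨v, hv, h⟩ := Matrix.exists_mulVec_eq_zero_iff.mpr this
  refine ⟨v, hv, ?_⟩
  rw [Matrix.sub_mulVec, Matrix.smul_mulVec, Matrix.one_mulVec, sub_eq_zero] at h
  exact h

/-- A matrix with `|tr A| > 2` is diagonalizable over the reals. -/
lemma exists_diag (A : SL2) (hx : 4 < trace2 A ^ 2) :
    ∃ (g : Matrix (Fin 2) (Fin 2) ℝ) (l m : ℝ), g.det ≠ 0 ∧ l * m = 1 ∧ m ^ 2 < l ^ 2 ∧
      (A : Matrix (Fin 2) (Fin 2) ℝ) * g = g * !![l, 0; 0, m] := by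
  set x := trace2 A with hxdef
  set s := √(x ^ 2 - 4) with hs
  have hs2 : s ^ 2 = x ^ 2 - 4 := Real.sq_sqrt (by linarith)
  have hs0 : 0 < s := Real.sqrt_pos.mpr (by linarith)
  obtain ⟨l, m, hlm, hsum, hlt⟩ : ∃ l m : ℝ, l * m = 1 ∧ l + m = x ∧ m ^ 2 < l ^ 2 := by
    rcases lt_or_gt_of_ne (show x ≠ 0 by rintro h; rw [h] at hx; norm_num at hx) with h | h
    · exact ⟨(x - s) / 2, (x + s) / 2, by linarith, by ring, by nlinarith⟩
    · exact ⟨(x + s) / 2, (x - s) / 2, by linarith, by ring, by nlinarith⟩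
  obtain ⟨v, hv, hAv⟩ := exists_eigenvector A l (by rw [← hxdef, ← hsum]; linarith)
  obtain ⟨w, hw, hAw⟩ := exists_eigenvector A m (by rw [← hxdef, ← hsum]; linarith)
  have hne : l - m ≠ 0 := fun h => by
    have : l = m := by linarith
    rw [this] at hlt
    exact lt_irrefl _ hlt
  have hv0 := congrFun hAv 0
  have hv1 := congrFun hAv 1
  have hw0 := congrFun hAw 0
  have hw1 := congrFun hAw 1
  simp only [Matrix.mulVec, dotProduct, Fin.sum_univ_two, Pi.smul_apply, smul_eq_mul]
    at hv0 hv1 hw0 hw1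
  refine ⟨!![v 0, w 0; v 1, w 1], l, m, ?_, hlm, hlt, ?_⟩
  · rw [Matrix.det_fin_two_of]
    intro hdet
    -- parallel eigenvectors would have the same eigenvalue
    have h1 : ∀ i j, (l - m) * (v i * w j) = 0 := by
      have e : ∀ i j, v i * w j = v j * w i := by
        intro i j
        fin_cases i <;> fin_cases j <;> simp <;> linarith
      have e0 := e 0 1
      intro i j
      fin_cases i <;> fin_cases j <;> simp only [Fin.zero_eta, Fin.mk_one]
      · linear_combination (-w 0) * hv0 + v 0 * hw0 - (A : Matrix (Fin 2) (Fin 2) ℝ) 0 1 * e0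
      · linear_combination (-w 1) * hv0 + v 1 * hw0 + (A.1 0 0 - m) * e0
      · linear_combination (-w 0) * hv1 + v 0 * hw1 + (m - A.1 1 1) * e0
      · linear_combination (-w 1) * hv1 + v 1 * hw1 + (A : Matrix (Fin 2) (Fin 2) ℝ) 1 0 * e0
    have h2 : ∀ i j, v i * w j = 0 := fun i j => (mul_eq_zero.mp (h1 i j)).resolve_left hne
    obtain ⟨i, hi⟩ := Function.ne_iff.mp hv
    obtain ⟨j, hj⟩ := Function.ne_iff.mp hw
    exact mul_ne_zero hi hj (h2 i j)
  · ext i j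
    fin_cases i <;> fin_cases j <;>
      simp [Matrix.mul_apply, Fin.sum_univ_two] <;> linarith

/-- A matrix with trace `±2` is triangular in a suitable basis. -/
lemma exists_triangular (A : SL2) (hx : trace2 A ^ 2 = 4) :
    ∃ (g : Matrix (Fin 2) (Fin 2) ℝ) (s q : ℝ), g.det ≠ 0 ∧ s ^ 2 = 1 ∧
      (A : Matrix (Fin 2) (Fin 2) ℝ) * g = g * !![s, q; 0, s] := by
  set s := trace2 A / 2 with hs
  have hs2 : s ^ 2 = 1 := by rw [hs]; linarith
  have htr : trace2 A = 2 * s := by rw [hs]; ring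
  obtain ⟨v, hv, hAv⟩ := exists_eigenvector A s (by rw [htr]; linarith)
  have hg : (!![v 0, -v 1; v 1, v 0] : Matrix (Fin 2) (Fin 2) ℝ).det ≠ 0 := by
    rw [Matrix.det_fin_two_of]
    intro h
    apply hv
    ext i
    fin_cases i <;> simp <;> nlinarith [sq_nonneg (v 0), sq_nonneg (v 1)]
  obtain ⟨a, b, c, d, hA, hd⟩ := exists_conj A _ hg
  have htr' := trace_of_conj _ _ _ hg hA
  have h00 := congrFun (congrFun hA 0) 0
  have h10 := congrFun (congrFun hA 1) 0
  have hv0 := congrFun hAv 0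
  have hv1 := congrFun hAv 1
  simp only [Matrix.mulVec, dotProduct, Fin.sum_univ_two, Pi.smul_apply, smul_eq_mul] at hv0 hv1
  simp [Matrix.mul_apply, Fin.sum_univ_two] at h00 h10
  rw [Matrix.det_fin_two_of] at hg
  have hc : c = 0 := by
    apply (mul_eq_zero.mp _).resolve_left hg
    linear_combination v 1 * h00 - v 0 * h10 - v 1 * hv0 + v 0 * hv1
  have ha : a = s := by
    apply sub_eq_zero.mp
    apply (mul_eq_zero.mp _).resolve_left hg
    linear_combination (-v 0) * h00 - v 1 * h10 + v 0 * hv0 + v 1 * hv1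
  have hd' : d = s := by
    rw [show Matrix.trace (A : Matrix (Fin 2) (Fin 2) ℝ) = trace2 A from rfl, htr,
      Matrix.trace_fin_two_of] at htr'
    linarith
  refine ⟨_, s, b, by rwa [← Matrix.det_fin_two_of] at hg, hs2, ?_⟩
  rw [hA, hc, ha, hd']


/-! ### Trace conditions implying straightness -/

/-- Straightness criterion in coordinates adapted to a diagonal matrix `diag (l, m)`, when the
off-diagonal entries of the second matrix have the same sign: the axes cross and, after a
reflection, the coordinate quadrant is preserved. -/
lemma straight_of_offdiag_nonneg (A B : SL2) (g : Matrix (Fin 2) (Fin 2) ℝ) (l m a b c d : ℝ)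
    (hg : g.det ≠ 0) (hlm : l * m = 1)
    (hA : (A : Matrix (Fin 2) (Fin 2) ℝ) * g = g * !![l, 0; 0, m])
    (hB : (B : Matrix (Fin 2) (Fin 2) ℝ) * g = g * !![a, b; c, d])
    (hdet : a * d - b * c = 1) (hbc : 0 ≤ b * c) : Straight (A, B) := by
  have ha : a ≠ 0 := by rintro rfl; linarith
  have hl : l ≠ 0 := by rintro rfl; linarith
  have had : 0 < a * d := by linarith
  have ha2 : 0 < a ^ 2 := by positivity
  -- `s = ±1` is the reflection making the off-diagonal entries agree in sign with `a`
  obtain ⟨s, hs, hb, hc⟩ : ∃ s : ℝ, s ^ 2 = 1 ∧ 0 ≤ a * (s * b) ∧ 0 ≤ a * (s * c) := by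
    by_cases h : 0 ≤ a * b ∧ 0 ≤ a * c
    · exact ⟨1, by norm_num, by linarith, by linarith⟩
    · refine ⟨-1, by norm_num, ?_, ?_⟩
      all_goals
        by_contra! h'
        apply h
        have hp : 0 ≤ (a * b) * (a * c) := by
          have : (a * b) * (a * c) = a ^ 2 * (b * c) := by ring
          rw [this]; positivity
        constructor <;> by_contra! h'' <;> nlinarith
  refine straight_of_cone A B (g * !![1, 0; 0, s]) !![l, 0; 0, m] !![a, s * b; s * c, d] ?_ ?_ ?_
    l a hl ha ?_ ?_
  · rw [Matrix.det_mul, Matrix.det_fin_two_of]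
    refine mul_ne_zero hg ?_
    rintro h
    have : s = 0 := by linarith
    rw [this] at hs
    norm_num at hs
  · rw [← Matrix.mul_assoc, hA, Matrix.mul_assoc, Matrix.mul_assoc]
    congr 1
    ext i j
    fin_cases i <;> fin_cases j <;> simp [Matrix.mul_apply, Fin.sum_univ_two]
    ring
  · rw [← Matrix.mul_assoc, hB, Matrix.mul_assoc, Matrix.mul_assoc]
    congr 1
    ext i j
    fin_cases i <;> fin_cases j <;> simp [Matrix.mul_apply, Fin.sum_univ_two]
    · ring
    · linear_combination (-c) * hs
    · ring
  · intro i j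
    fin_cases i <;> fin_cases j <;> simp [hlm, mul_self_nonneg]
  · intro i j
    fin_cases i <;> fin_cases j <;> simp [hb, hc, had.le, mul_self_nonneg]

/-- Straightness criterion in coordinates adapted to a diagonal matrix `diag (l, m)`, when the
axes are disjoint (`b * c < 0`) and coherently oriented (`d ^ 2 ≤ a ^ 2`): a cone having the
attracting direction of the diagonal matrix on its boundary is preserved. -/
lemma straight_of_offdiag_neg (A B : SL2) (g : Matrix (Fin 2) (Fin 2) ℝ) (l m a b c d : ℝ)
    (hg : g.det ≠ 0) (hlm : l * m = 1) (hml : m ^ 2 < l ^ 2)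
    (hA : (A : Matrix (Fin 2) (Fin 2) ℝ) * g = g * !![l, 0; 0, m])
    (hB : (B : Matrix (Fin 2) (Fin 2) ℝ) * g = g * !![a, b; c, d])
    (hdet : a * d - b * c = 1) (hy : 4 ≤ (a + d) ^ 2) (hbc : b * c < 0) (had : d ^ 2 ≤ a ^ 2) :
    Straight (A, B) := by
  have hl : l ≠ 0 := by rintro rfl; linarith
  have hl2 : 1 ≤ l ^ 2 := by nlinarith [sq_nonneg (l ^ 2 - 1), mul_pow l m 2]
  -- `τ = ±1` is the sign of `tr B`
  obtain ⟨τ, hτ, hy', had'⟩ : ∃ τ : ℝ, τ ^ 2 = 1 ∧ 2 ≤ τ * a + τ * d ∧ τ * d ≤ τ * a := by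
    rcases le_total 0 (a + d) with h | h
    · have h2 : 2 ≤ a + d := by nlinarith
      exact ⟨1, by norm_num, by linarith, by nlinarith⟩
    · have h2 : a + d ≤ -2 := by nlinarith
      exact ⟨-1, by norm_num, by linarith, by nlinarith⟩
  -- the second edge of the cone is `(1, -t)`, where `t` balances the off-diagonal entries
  obtain ⟨t, ht, htb⟩ : ∃ t : ℝ, t ^ 2 * b = -c ∧ 0 < τ * (t * b) := by
    have hb : b ≠ 0 := by rintro rfl; linarith
    have hq : 0 < -c / b := by
      rw [show -c / b = -(b * c) / b ^ 2 by field_simp]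
      have : 0 < -(b * c) := by linarith
      positivity
    have hsq := Real.sq_sqrt hq.le
    have hpos := Real.sqrt_pos.mpr hq
    have e : √(-c / b) ^ 2 * b = -c := by rw [hsq]; field_simp
    have hne : τ * b ≠ 0 := mul_ne_zero (by rintro rfl; norm_num at hτ) hb
    rcases lt_or_gt_of_ne hne with h | h
    · exact ⟨-√(-c / b), by rw [neg_sq]; exact e, by nlinarith⟩
    · exact ⟨√(-c / b), e, by nlinarith⟩
  set β := t * b with hβ
  have hβc : t * β = -c := by rw [hβ]; linarith
  have ht0 : t ≠ 0 := by rintro rfl; simp [hβ] at htb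
  have hτ0 : τ ≠ 0 := by rintro rfl; norm_num at hτ
  have hβ2 : β ^ 2 = -(b * c) := by rw [hβ]; linear_combination b * ht
  have hdet' : (τ * a) * (τ * d) + (τ * β) ^ 2 = 1 := by
    linear_combination (a * d + β ^ 2) * hτ + hdet + hβ2
  have hgap : 2 * (τ * β) ≤ τ * a - τ * d := by
    refine le_of_sq_le_sq ?_ (by linarith)
    nlinarith
  have hlow : 0 ≤ τ * β + τ * d := by
    by_contra! h
    nlinarith
  refine straight_of_cone A B (g * !![1, 1; 0, -t]) !![l, l - m; 0, m]
    !![a - β, a - 2 * β - d; β, β + d] ?_ ?_ ?_ l τ hl hτ0 ?_ ?_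
  · rw [Matrix.det_mul, Matrix.det_fin_two_of]
    exact mul_ne_zero hg (by simpa using ht0)
  · rw [← Matrix.mul_assoc, hA, Matrix.mul_assoc, Matrix.mul_assoc]
    congr 1
    ext i j
    fin_cases i <;> fin_cases j <;> simp [Matrix.mul_apply, Fin.sum_univ_two]
    ring
  · rw [← Matrix.mul_assoc, hB, Matrix.mul_assoc, Matrix.mul_assoc]
    congr 1
    ext i j
    fin_cases i <;> fin_cases j <;> simp [Matrix.mul_apply, Fin.sum_univ_two]
    · linarith
    · linarith
    · linarith
  · intro i j
    fin_cases i <;> fin_cases j <;> simp [hlm, mul_self_nonneg]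
    nlinarith
  · intro i j
    fin_cases i <;> fin_cases j <;> simp <;> linarith

/-- The invariant `tr [A, B] - 2` in terms of the traces `x`, `y`, `z` of `A`, `B`, `A * B`. -/
noncomputable def kappa (x y z : ℝ) : ℝ := x ^ 2 + y ^ 2 + z ^ 2 - x * y * z - 4

/-- In a basis where `A = diag (l, m)` and `B = !![a, b; c, d]`, one has
`kappa = - b c (l - m)²` and `x y (2 z - x y) = (l² - m²) (a² - d²)`, so the two alternatives of
the hypothesis are those of the two cone criteria. -/
lemma straight_of_hyperbolic (A B : SL2) (hx : 4 < trace2 A ^ 2) (hy : 4 ≤ trace2 B ^ 2)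
    (h : kappa (trace2 A) (trace2 B) (trace2 (A * B)) ≤ 0 ∨
      0 ≤ trace2 A * trace2 B * (2 * trace2 (A * B) - trace2 A * trace2 B)) :
    Straight (A, B) := by
  obtain ⟨g, l, m, hg, hlm, hml, hA⟩ := exists_diag A hx
  obtain ⟨a, b, c, d, hB, hdet⟩ := exists_conj B g hg
  have hAB : ((A * B : SL2) : Matrix (Fin 2) (Fin 2) ℝ) * g
      = g * (!![l, 0; 0, m] * !![a, b; c, d]) := by
    rw [Matrix.SpecialLinearGroup.coe_mul, Matrix.mul_assoc, hB, ← Matrix.mul_assoc, hA,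
      Matrix.mul_assoc]
  have tx : trace2 A = l + m := by
    rw [trace2, trace_of_conj _ _ _ hg hA, Matrix.trace_fin_two_of]
  have ty : trace2 B = a + d := by
    rw [trace2, trace_of_conj _ _ _ hg hB, Matrix.trace_fin_two_of]
  have tz : trace2 (A * B) = l * a + m * d := by
    rw [trace2, trace_of_conj _ _ _ hg hAB, Matrix.trace_fin_two]
    simp [Matrix.mul_apply, Fin.sum_univ_two]
  rw [tx, ty, tz] at h
  rw [ty] at hy
  have hlm0 : 0 < (l - m) ^ 2 := by
    have : l - m ≠ 0 := fun h0 => by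
      have : l = m := by linarith
      rw [this] at hml
      exact lt_irrefl _ hml
    positivity
  by_cases hbc : 0 ≤ b * c
  · exact straight_of_offdiag_nonneg A B g l m a b c d hg hlm hA hB hdet hbc
  · push Not at hbc
    refine straight_of_offdiag_neg A B g l m a b c d hg hlm hml hA hB hdet hy hbc ?_
    rcases h with h | h
    · exfalso
      have e : kappa (l + m) (a + d) (l * a + m * d) = -(b * c) * (l - m) ^ 2 := by
        unfold kappa
        have hbc' : b * c = a * d - 1 := by linarith
        rw [hbc']
        linear_combination (4 - (a + d) ^ 2) * hlm
      rw [e] at h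
      nlinarith
    · have e : (l + m) * (a + d) * (2 * (l * a + m * d) - (l + m) * (a + d))
          = (l ^ 2 - m ^ 2) * (a ^ 2 - d ^ 2) := by ring
      rw [e] at h
      have := nonneg_of_mul_nonneg_right h (by linarith)
      linarith

/-- The matrix with expression `!![s * e, q; 0, s / e]` in the basis `g`, for `e = exp ε`. -/
noncomputable def stretch (g : Matrix (Fin 2) (Fin 2) ℝ) (hg : g.det ≠ 0) (s q : ℝ)
    (hs : s ^ 2 = 1) (ε : ℝ) : SL2 :=
  ⟨g * !![s * Real.exp ε, q; 0, s * Real.exp (-ε)] * g⁻¹, by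
    have hu : IsUnit g.det := isUnit_iff_ne_zero.mpr hg
    rw [Matrix.det_conj ((Matrix.isUnit_iff_isUnit_det g).mpr hu), Matrix.det_fin_two_of,
      Real.exp_neg]
    field_simp
    linarith⟩

/-- Two parabolic (or `±1`) matrices need not preserve a common cone, as when they fix the same point
and push in opposite directions; the pair is instead a limit of pairs covered by
`straight_of_hyperbolic`. -/
lemma straight_of_parabolic (A B : SL2) (hx : trace2 A ^ 2 = 4) (hy : trace2 B ^ 2 = 4)
    (h : 0 ≤ trace2 A * trace2 B * (2 * trace2 (A * B) - trace2 A * trace2 B)) :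
    Straight (A, B) := by
  obtain ⟨g, s, q, hg, hs, hA⟩ := exists_triangular A hx
  obtain ⟨a, b, c, d, hB, hdet⟩ := exists_conj B g hg
  have hu : IsUnit g.det := isUnit_iff_ne_zero.mpr hg
  have tx : trace2 A = s + s := by
    rw [trace2, trace_of_conj _ _ _ hg hA, Matrix.trace_fin_two_of]
  have ty : trace2 B = a + d := by
    rw [trace2, trace_of_conj _ _ _ hg hB, Matrix.trace_fin_two_of]
  have hprod : ∀ (M : SL2) (u v w : ℝ),
      (M : Matrix (Fin 2) (Fin 2) ℝ) * g = g * !![u, v; 0, w] →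
      trace2 (M * B) = u * a + v * c + w * d := by
    intro M u v w hM
    have hAB : ((M * B : SL2) : Matrix (Fin 2) (Fin 2) ℝ) * g
        = g * (!![u, v; 0, w] * !![a, b; c, d]) := by
      rw [Matrix.SpecialLinearGroup.coe_mul, Matrix.mul_assoc, hB, ← Matrix.mul_assoc, hM,
        Matrix.mul_assoc]
    rw [trace2, trace_of_conj _ _ _ hg hAB, Matrix.trace_fin_two]
    simp [Matrix.mul_apply, Fin.sum_univ_two]
  rw [tx, ty, hprod A s q s hA] at h
  rw [ty] at hy
  have hqc : 0 ≤ s * (a + d) * (q * c) := by nlinarith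
  -- the side from which `A` is approached depends on the sign of `(a + d) * (a - d)`
  obtain ⟨η, hη, hηad⟩ : ∃ η : ℝ, (η = 1 ∨ η = -1) ∧ 0 ≤ (a + d) * (a - d) * η := by
    rcases le_total 0 ((a + d) * (a - d)) with h | h
    · exact ⟨1, Or.inl rfl, by linarith⟩
    · exact ⟨-1, Or.inr rfl, by linarith⟩
  have hη2 : η ^ 2 = 1 := by rcases hη with h | h <;> rw [h] <;> norm_num
  have hlim : Filter.Tendsto (fun ε : ℝ => (stretch g hg s q hs (η * ε), B))
      (nhdsWithin 0 (Set.Ioi 0)) (nhds (A, B)) := by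
    have hc : Continuous fun ε : ℝ => stretch g hg s q hs (η * ε) := by
      refine Continuous.subtype_mk (p := fun M : Matrix (Fin 2) (Fin 2) ℝ => M.det = 1) ?_ _
      have : Continuous fun ε : ℝ => (!![s * Real.exp (η * ε), q; 0, s * Real.exp (-(η * ε))] :
          Matrix (Fin 2) (Fin 2) ℝ) := by
        refine continuous_matrix fun i j => ?_
        fin_cases i <;> fin_cases j <;> simp <;> fun_prop
      exact (continuous_const.matrix_mul this).matrix_mul continuous_const
    have h0 : stretch g hg s q hs (η * 0) = A := by
      apply Subtype.ext
      change g * !![s * Real.exp (η * 0), q; 0, s * Real.exp (-(η * 0))] * g⁻¹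
        = (A : Matrix (Fin 2) (Fin 2) ℝ)
      simp only [mul_zero, neg_zero, Real.exp_zero, mul_one]
      rw [← hA, Matrix.mul_assoc, Matrix.mul_nonsing_inv g hu, Matrix.mul_one]
    have h1 := (hc.prodMk (continuous_const (y := B))).tendsto 0
    rw [h0] at h1
    exact h1.mono_left nhdsWithin_le_nhds
  refine isClosed_closure.mem_of_tendsto hlim ?_
  filter_upwards [self_mem_nhdsWithin] with ε hε
  have hε' : (0 : ℝ) < ε := hε
  set A' := stretch g hg s q hs (η * ε)
  set e := Real.exp (η * ε)
  set f := Real.exp (-(η * ε))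
  have hef : e * f = 1 := by rw [← Real.exp_add]; simp
  have he : 0 < e := Real.exp_pos _
  have hf : 0 < f := Real.exp_pos _
  have hA' : (A' : Matrix (Fin 2) (Fin 2) ℝ) * g = g * !![s * e, q; 0, s * f] := by
    change g * !![s * e, q; 0, s * f] * g⁻¹ * g = _
    rw [Matrix.mul_assoc, Matrix.nonsing_inv_mul g hu, Matrix.mul_one]
  have tx' : trace2 A' = s * e + s * f := by
    rw [trace2, trace_of_conj _ _ _ hg hA', Matrix.trace_fin_two_of]
  have hηef : 0 < η * (e - f) := by
    rcases hη with h | h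
    · have : f < e := Real.exp_lt_exp.mpr (by rw [h]; linarith)
      rw [h]; linarith
    · have : e < f := Real.exp_lt_exp.mpr (by rw [h]; linarith)
      rw [h]; linarith
  refine straight_of_hyperbolic A' B ?_ (by rw [ty, hy]) (Or.inr ?_)
  · have hne : 0 < (e - f) ^ 2 := by
      have : e - f ≠ 0 := fun h => by rw [h] at hηef; simp at hηef
      positivity
    rw [tx']
    nlinarith
  · rw [tx', ty, hprod A' _ _ _ hA']
    have e1 : (s * e + s * f) * (a + d) * (2 * (s * e * a + q * c + s * f * d)
        - (s * e + s * f) * (a + d))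
        = (e + f) * (2 * (s * (a + d) * (q * c)) + (a + d) * (a - d) * (e - f)) := by
      linear_combination (e + f) * (a + d) * (a - d) * (e - f) * hs
    rw [e1]
    have e2 : 0 ≤ (a + d) * (a - d) * (e - f) := by
      have : (a + d) * (a - d) * (e - f) = ((a + d) * (a - d) * η) * (η * (e - f)) := by
        linear_combination (-(a + d) * (a - d) * (e - f)) * hη2
      rw [this]
      exact mul_nonneg hηad hηef.le
    positivity

/-- Twistedness forces two trace inequalities: with `x, y, z` the traces of `A`, `B`, `A * B`,
the commutator has trace larger than `2` and `x y (2 z - x y) < 0`. These are all that the descent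
needs to know about twisted pairs. -/
lemma twisted_traces (A B : SL2) (h : Twisted (A, B)) :
    0 < kappa (trace2 A) (trace2 B) (trace2 (A * B)) ∧
      trace2 A * trace2 B * (2 * trace2 (A * B) - trace2 A * trace2 B) < 0 := by
  obtain ⟨hx, hy, hs⟩ := h
  have sq4 : ∀ r : ℝ, 2 ≤ |r| → 4 ≤ r ^ 2 := fun r hr => by
    rw [← sq_abs]; nlinarith
  have hx := sq4 _ hx
  have hy := sq4 _ hy
  by_contra hcon
  apply hs
  have hor : kappa (trace2 A) (trace2 B) (trace2 (A * B)) ≤ 0 ∨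
      0 ≤ trace2 A * trace2 B * (2 * trace2 (A * B) - trace2 A * trace2 B) := by
    by_contra! h'
    exact hcon h'
  have hBA : trace2 (B * A) = trace2 (A * B) := by
    simp only [trace2, Matrix.SpecialLinearGroup.coe_mul]
    exact Matrix.trace_mul_comm _ _
  rcases hx.lt_or_eq with hx' | hx'
  · exact straight_of_hyperbolic A B hx' hy hor
  rcases hy.lt_or_eq with hy' | hy'
  · refine straight_swap (straight_of_hyperbolic B A hy' hx ?_)
    rw [hBA]
    refine hor.imp (fun h => ?_) (fun h => ?_)
    · unfold kappa at h ⊢; linarith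
    · linarith
  refine straight_of_parabolic A B hx'.symm hy'.symm ?_
  rcases hor with h | h
  · -- for two parabolic matrices the invariant is a perfect square
    have e : kappa (trace2 A) (trace2 B) (trace2 (A * B))
        = (2 * trace2 (A * B) - trace2 A * trace2 B) ^ 2 / 4 := by
      unfold kappa
      linear_combination (trace2 B ^ 2 / 4 - 1) * hx'
    have h0 : 2 * trace2 (A * B) - trace2 A * trace2 B = 0 := by
      rw [e] at h
      have : (2 * trace2 (A * B) - trace2 A * trace2 B) ^ 2 = 0 :=
        le_antisymm (by linarith) (sq_nonneg _)
      simpa using this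
    rw [h0, mul_zero]
  · exact h

/-! ### Dynamics on trace triples -/

/-- The traces of `A`, `B`, `A * B`. -/
noncomputable def traces (p : SL2 × SL2) : ℝ × ℝ × ℝ :=
  (trace2 p.1, trace2 p.2, trace2 (p.1 * p.2))

/-- The action of `F₊` (for `true`) and `F₋` (for `false`) on trace triples. -/
noncomputable def traceStep (T : ℝ × ℝ × ℝ) (e : Bool) : ℝ × ℝ × ℝ :=
  if e then (T.1, T.2.2, T.1 * T.2.2 - T.2.1) else (T.2.2, T.2.1, T.2.2 * T.2.1 - T.1)

/-- The action of `applySeq` on trace triples. -/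
noncomputable def traceSeq (s : List Bool) (T : ℝ × ℝ × ℝ) : ℝ × ℝ × ℝ :=
  s.foldl traceStep T

@[simp] lemma traceSeq_nil (T : ℝ × ℝ × ℝ) : traceSeq [] T = T := rfl

@[simp] lemma traceSeq_cons (e : Bool) (s : List Bool) (T : ℝ × ℝ × ℝ) :
    traceSeq (e :: s) T = traceSeq s (traceStep T e) := rfl

lemma traces_step (p : SL2 × SL2) (e : Bool) :
    traces (if e then Fplus p else Fminus p) = traceStep (traces p) e := by
  obtain ⟨A, B⟩ := p
  have hA := A.2
  have hB := B.2
  rw [Matrix.det_fin_two] at hA hB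
  cases e
  · simp only [Bool.false_eq_true, if_false, Fminus, traces, traceStep, trace2,
      Matrix.SpecialLinearGroup.coe_mul, Matrix.trace_fin_two, Matrix.mul_apply,
      Fin.sum_univ_two, Prod.mk.injEq]
    refine ⟨by ring, trivial, ?_⟩
    linear_combination (-(A.1 0 0 + A.1 1 1)) * hB
  · simp only [if_true, Fplus, traces, traceStep, trace2,
      Matrix.SpecialLinearGroup.coe_mul, Matrix.trace_fin_two, Matrix.mul_apply,
      Fin.sum_univ_two, Prod.mk.injEq]
    refine ⟨trivial, trivial, ?_⟩
    linear_combination (-(B.1 0 0 + B.1 1 1)) * hA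

lemma traces_applySeq (s : List Bool) (p : SL2 × SL2) :
    traces (applySeq s p) = traceSeq s (traces p) := by
  induction s generalizing p with
  | nil => rfl
  | cons e s ih =>
    rw [traceSeq_cons, ← traces_step, ← ih]
    rfl

/-- Freeness of a pair, in terms of its trace triple. -/
def FreeTriple (T : ℝ × ℝ × ℝ) : Prop :=
  2 ≤ |T.1| ∧ 2 ≤ |T.2.1| ∧ 2 ≤ |T.2.2| ∧ T.1 * T.2.1 * T.2.2 < 0

/-- Almost hyperbolicity of a pair, in terms of its trace triple. -/
def NonEllipticOrbit (T : ℝ × ℝ × ℝ) : Prop :=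
  ∀ s, 2 ≤ |(traceSeq s T).1| ∧ 2 ≤ |(traceSeq s T).2.1|

/-- The trace condition `x y z ≥ (x y)² / 2` of coherently oriented pairs; it persists under
`F₊` and `F₋` and excludes freeness. -/
def CoherentTriple (T : ℝ × ℝ × ℝ) : Prop :=
  4 ≤ T.1 ^ 2 ∧ 4 ≤ T.2.1 ^ 2 ∧ (T.1 * T.2.1) ^ 2 ≤ 2 * (T.1 * T.2.1 * T.2.2)

lemma four_le_sq {r : ℝ} (h : 2 ≤ |r|) : 4 ≤ r ^ 2 := by
  rw [← sq_abs]; nlinarith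

lemma CoherentTriple.not_free {T : ℝ × ℝ × ℝ} (h : CoherentTriple T) : ¬ FreeTriple T := by
  rintro ⟨-, -, -, hneg⟩
  have := h.2.2
  nlinarith [sq_nonneg (T.1 * T.2.1)]

/-- If `x y z ≥ (x y)² / 2` then `x y z ≤ (x z)² / 2`. -/
lemma coherent_aux {x y z : ℝ} (hx : 4 ≤ x ^ 2) (hy : 4 ≤ y ^ 2)
    (h : (x * y) ^ 2 ≤ 2 * (x * y * z)) : 4 ≤ z ^ 2 ∧ 2 * (x * y * z) ≤ (x * z) ^ 2 := by
  have hxy : 16 ≤ (x * y) ^ 2 := by rw [mul_pow]; nlinarith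
  have hz : (x * y) ^ 2 ≤ (2 * z) ^ 2 := by
    by_contra! hlt
    nlinarith [sq_nonneg (x * y - 2 * z)]
  rw [mul_pow] at hxy hz
  refine ⟨by nlinarith, ?_⟩
  by_contra! hlt
  -- `P = x y z` would satisfy `P² = y² (x z)² < 2 y² P` and `P ≥ x² y² / 2 ≥ 2 y²`
  have hP : 0 < x * y * z := by nlinarith
  have h1 : y ^ 2 * (x * z) ^ 2 < y ^ 2 * (2 * (x * y * z)) :=
    mul_lt_mul_of_pos_left hlt (by linarith)
  have h2 : x * y * z < 2 * y ^ 2 := by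
    by_contra! h3
    nlinarith
  nlinarith

lemma CoherentTriple.step {T : ℝ × ℝ × ℝ} (h : CoherentTriple T) (e : Bool) :
    CoherentTriple (traceStep T e) := by
  obtain ⟨x, y, z⟩ := T
  obtain ⟨hx, hy, hz⟩ := h
  simp only at hx hy hz
  cases e
  · obtain ⟨h1, h2⟩ := coherent_aux (x := y) (y := x) (z := z) hy hx (by nlinarith)
    refine ⟨h1, hy, ?_⟩
    simp only [traceStep]
    simp
    nlinarith
  · obtain ⟨h1, h2⟩ := coherent_aux hx hy hz
    refine ⟨hx, h1, ?_⟩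
    simp only [traceStep]
    simp
    nlinarith

lemma CoherentTriple.not_free_seq {T : ℝ × ℝ × ℝ} (h : CoherentTriple T) (s : List Bool) :
    ¬ FreeTriple (traceSeq s T) := by
  induction s generalizing T with
  | nil => exact h.not_free
  | cons e s ih => exact ih (h.step e)

/-- One step after being free, a pair is coherently oriented, hence never free again. -/
lemma FreeTriple.step {T : ℝ × ℝ × ℝ} (h : FreeTriple T) (e : Bool) :
    CoherentTriple (traceStep T e) := by
  obtain ⟨x, y, z⟩ := T
  obtain ⟨hx, hy, hz, hneg⟩ := h
  simp only at hx hy hz hneg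
  cases e
  · refine ⟨four_le_sq hz, four_le_sq hy, ?_⟩
    simp [traceStep]
    nlinarith [sq_nonneg (z * y)]
  · refine ⟨four_le_sq hx, four_le_sq hz, ?_⟩
    simp [traceStep]
    nlinarith [sq_nonneg (x * z)]

lemma kappa_step_true (x y z : ℝ) : kappa x z (x * z - y) = kappa x y z := by
  unfold kappa; ring

lemma kappa_step_false (x y z : ℝ) : kappa z y (z * y - x) = kappa x y z := by
  unfold kappa; ring

lemma kappa_comm (x y z : ℝ) : kappa y x z = kappa x y z := by
  unfold kappa; ring

/-- If the larger trace is replaced, the new pair is again twisted: `kappa x y ·` decreases on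
`(-∞, x y / 2]` and is nonpositive at `2 y / x`, so `z < 2 y / x`. -/
lemma descent_twisted {x y z : ℝ} (hx : 2 ≤ x) (hxy : x ≤ y) (hk : 0 < kappa x y z)
    (hz : 2 * z < x * y) : x * z < 2 * y := by
  by_contra! h
  unfold kappa at hk
  have h1 : (x * z - 2 * y) * (x ^ 2 * y - x * z - 2 * y) ≥ 0 := by
    apply mul_nonneg
    · linarith
    · nlinarith [mul_pos (show 0 < x by linarith) (sub_pos.mpr hz),
        mul_nonneg (show 0 ≤ y by linarith) (show 0 ≤ x ^ 2 - 4 by nlinarith)]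
  have h2 : 0 ≤ (x ^ 2 - 4) * (y ^ 2 - x ^ 2) := mul_nonneg (by nlinarith) (by nlinarith)
  have h3 : 0 < x ^ 2 * (x ^ 2 + y ^ 2 + z ^ 2 - x * y * z - 4) := by
    have : 0 < x := by linarith
    positivity
  nlinarith

/-- Each descent step decreases the larger trace by at least `√κ`. -/
lemma descent_gap {x y z : ℝ} (hx : 2 ≤ x) (hxy : x ≤ y) (hz : 2 ≤ z) (h : x * z < 2 * y) :
    √(kappa x y z) ≤ y - z := by
  have hzy : z ≤ y := by nlinarith
  apply Real.sqrt_le_iff.mpr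
  refine ⟨by linarith, ?_⟩
  unfold kappa
  nlinarith [mul_nonneg (show 0 ≤ x - 2 by linarith) (show 0 ≤ y * z - x - 2 by nlinarith)]

/-- The wrong choice of generator, replacing the smaller trace, gives a coherently oriented
pair. -/
lemma coherent_of_wrong {x y z : ℝ} (hx : 2 ≤ x) (hxy : x ≤ y) (hz : 2 ≤ z) :
    4 ≤ z ^ 2 ∧ 4 ≤ y ^ 2 ∧ (z * y) ^ 2 ≤ 2 * (z * y * (z * y - x)) := by
  refine ⟨by nlinarith, by nlinarith, ?_⟩
  have h1 : 2 * x ≤ z * y := by nlinarith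
  nlinarith [mul_nonneg (show 0 ≤ z * y by nlinarith) (sub_nonneg.mpr h1)]

lemma NonEllipticOrbit.step {T : ℝ × ℝ × ℝ} (h : NonEllipticOrbit T) (e : Bool) :
    NonEllipticOrbit (traceStep T e) := fun s => h (e :: s)

lemma le_or_le_of_abs {z : ℝ} (h : 2 ≤ |z|) : z ≤ -2 ∨ 2 ≤ z := by
  rcases le_abs.mp h with h | h
  · exact Or.inr h
  · exact Or.inl (by linarith)

/-- The descent on trace triples with `x, y ≥ 2`. The last two clauses, saying that a step
decreases the larger trace by at least `4`, are what makes the induction yield the length bound. -/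
lemma descent (n : ℕ) (x y z : ℝ) (hx : 2 ≤ x) (hy : 2 ≤ y) (hk : 0 < kappa x y z)
    (hz : 2 * z < x * y) (hne : NonEllipticOrbit (x, y, z))
    (hn : x + y ≤ n * √(kappa x y z)) :
    (∃ s : List Bool, FreeTriple (traceSeq s (x, y, z)) ∧
      (s.length : ℝ) ≤ (x + y) / 4 - 1 ∧
      ∀ t : List Bool, FreeTriple (traceSeq t (x, y, z)) → t = s) ∧
    (2 ≤ z → x ≤ y → z + 4 ≤ y) ∧ (2 ≤ z → y ≤ x → z + 4 ≤ x) := by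
  induction n generalizing x y z with
  | zero => simp at hn; linarith
  | succ n ih =>
    have hx0 : 2 ≤ |x| := by rw [abs_of_nonneg (by linarith)]; exact hx
    have hy0 : 2 ≤ |y| := by rw [abs_of_nonneg (by linarith)]; exact hy
    have hz0 : 2 ≤ |z| := (hne [true]).2
    push_cast at hn
    rcases le_or_le_of_abs hz0 with hz1 | hz1
    · have hf : FreeTriple (x, y, z) := by
        refine ⟨hx0, hy0, hz0, ?_⟩
        simp only
        have : 0 < x * y := by positivity
        nlinarith
      refine ⟨⟨[], hf, by simp; linarith, ?_⟩, fun h => by linarith, fun h => by linarith⟩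
      rintro (_ | ⟨e, t⟩) ht
      · rfl
      · exact absurd ht ((hf.step e).not_free_seq t)
    · have hnf : ¬ FreeTriple (x, y, z) := by
        rintro ⟨-, -, -, h⟩
        simp only at h
        have : 0 < x * y * z := by positivity
        linarith
      rcases le_total x y with hxy | hxy
      · have hlt := descent_twisted hx hxy hk hz
        have hgap := descent_gap hx hxy hz1 hlt
        have hne' := hne.step true
        have hw0 : 2 ≤ |x * z - y| := (hne' [true]).2
        obtain ⟨⟨s, hs, hlen, huniq⟩, g1, g2⟩ := ih x z (x * z - y) hx hz1
          (by rwa [kappa_step_true]) (by linarith) hne' (by rw [kappa_step_true]; linarith)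
        have hfour : z + 4 ≤ y := by
          rcases le_or_le_of_abs hw0 with hw | hw
          · nlinarith
          · rcases le_total x z with h | h
            · have := g1 hw h; nlinarith
            · have := g2 hw h; nlinarith
        refine ⟨⟨true :: s, hs, by simp; linarith, ?_⟩, fun _ _ => hfour, fun _ _ => by linarith⟩
        rintro (_ | ⟨_ | _, t⟩) ht
        · exact absurd ht hnf
        · have hc : CoherentTriple (traceStep (x, y, z) false) := coherent_of_wrong hx hxy hz1
          exact absurd ht (hc.not_free_seq t)
        · rw [huniq t ht]
      · have hz' : 2 * z < y * x := by linarith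
        have hlt := descent_twisted hy hxy (by rwa [kappa_comm]) hz'
        have hgap := descent_gap hy hxy hz1 hlt
        rw [kappa_comm] at hgap
        have hne' := hne.step false
        have hw0 : 2 ≤ |z * y - x| := (hne' [true]).2
        obtain ⟨⟨s, hs, hlen, huniq⟩, g1, g2⟩ := ih z y (z * y - x) hz1 hy
          (by rwa [kappa_step_false]) (by linarith) hne' (by rw [kappa_step_false]; linarith)
        have hfour : z + 4 ≤ x := by
          rcases le_or_le_of_abs hw0 with hw | hw
          · nlinarith
          · rcases le_total z y with h | h
            · have := g1 hw h; nlinarith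
            · have := g2 hw h; nlinarith
        refine ⟨⟨false :: s, hs, by simp; linarith, ?_⟩, fun _ _ => by linarith, fun _ _ => hfour⟩
        rintro (_ | ⟨_ | _, t⟩) ht
        · exact absurd ht hnf
        · rw [huniq t ht]
        · refine absurd ht (CoherentTriple.not_free_seq ?_ t)
          obtain ⟨h1, h2, h3⟩ := coherent_of_wrong hy hxy hz1
          refine ⟨h2, h1, ?_⟩
          simp only [traceStep, if_true]
          linarith

/-- Trace triples of `(A, B)` and `(±A, ±B)`. -/
def SignEquiv (T U : ℝ × ℝ × ℝ) : Prop :=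
  ∃ σ τ : ℝ, (σ = 1 ∨ σ = -1) ∧ (τ = 1 ∨ τ = -1) ∧ U = (σ * T.1, τ * T.2.1, σ * τ * T.2.2)

lemma SignEquiv.step {T U : ℝ × ℝ × ℝ} (h : SignEquiv T U) (e : Bool) :
    SignEquiv (traceStep T e) (traceStep U e) := by
  obtain ⟨σ, τ, hσ, hτ, rfl⟩ := h
  have hs : σ ^ 2 = 1 := by rcases hσ with h | h <;> rw [h] <;> norm_num
  have ht : τ ^ 2 = 1 := by rcases hτ with h | h <;> rw [h] <;> norm_num
  have hst : σ * τ = 1 ∨ σ * τ = -1 := by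
    rcases hσ with h | h <;> rcases hτ with h' | h' <;> rw [h, h'] <;> norm_num
  cases e
  · refine ⟨σ * τ, τ, hst, hτ, ?_⟩
    simp only [traceStep, Bool.false_eq_true, if_false, Prod.mk.injEq, true_and]
    linear_combination (σ * T.1) * ht
  · refine ⟨σ, σ * τ, hσ, hst, ?_⟩
    simp only [traceStep, if_true, Prod.mk.injEq, true_and]
    linear_combination (τ * T.2.1) * hs

lemma SignEquiv.seq {T U : ℝ × ℝ × ℝ} (h : SignEquiv T U) (s : List Bool) :
    SignEquiv (traceSeq s T) (traceSeq s U) := by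
  induction s generalizing T U with
  | nil => exact h
  | cons e s ih => exact ih (h.step e)

lemma SignEquiv.abs_eq {T U : ℝ × ℝ × ℝ} (h : SignEquiv T U) :
    |U.1| = |T.1| ∧ |U.2.1| = |T.2.1| := by
  obtain ⟨σ, τ, rfl | rfl, rfl | rfl, rfl⟩ := h <;> simp

lemma SignEquiv.free_iff {T U : ℝ × ℝ × ℝ} (h : SignEquiv T U) :
    FreeTriple U ↔ FreeTriple T := by
  obtain ⟨σ, τ, rfl | rfl, rfl | rfl, rfl⟩ := h <;> simp [FreeTriple]

lemma exists_sign (x : ℝ) : ∃ σ : ℝ, (σ = 1 ∨ σ = -1) ∧ σ * x = |x| := by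
  rcases le_total 0 x with h | h
  · exact ⟨1, Or.inl rfl, by rw [abs_of_nonneg h, one_mul]⟩
  · exact ⟨-1, Or.inr rfl, by rw [abs_of_nonpos h]; ring⟩

/-- **The stopping lemma** (Lemma 3.14 of Avila–Bochi–Yoccoz): an almost
hyperbolic twisted pair is mapped to a free pair by a unique element of the
monoid generated by `F₊`, `F₋`, whose length is at most
`(|tr A| + |tr B|)/4 − 1`. -/
theorem stopping_lemma (p : SL2 × SL2)
    (hah : AlmostHyperbolic p) (ht : Twisted p) :
    ∃ s : List Bool, FreePair (applySeq s p) ∧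
      (s.length : ℝ) ≤ (|trace2 p.1| + |trace2 p.2|) / 4 - 1 ∧
      ∀ t : List Bool, FreePair (applySeq t p) → t = s := by
  obtain ⟨hk, hz⟩ := twisted_traces p.1 p.2 ht
  obtain ⟨hx2, hy2, -⟩ := ht
  obtain ⟨σ, hσ, hσx⟩ := exists_sign (trace2 p.1)
  obtain ⟨τ, hτ, hτy⟩ := exists_sign (trace2 p.2)
  set x := trace2 p.1 with hx
  set y := trace2 p.2 with hy
  set z := trace2 (p.1 * p.2) with hzdef
  have hsign : SignEquiv (traces p) (|x|, |y|, σ * τ * z) := by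
    refine ⟨σ, τ, hσ, hτ, ?_⟩
    simp only [traces, ← hx, ← hy, ← hzdef, hσx, hτy]
  have hs : σ ^ 2 = 1 := by rcases hσ with h | h <;> rw [h] <;> norm_num
  have ht : τ ^ 2 = 1 := by rcases hτ with h | h <;> rw [h] <;> norm_num
  have hne : NonEllipticOrbit (|x|, |y|, σ * τ * z) := by
    intro s
    obtain ⟨h1, h2⟩ := (hsign.seq s).abs_eq
    rw [h1, h2, ← traces_applySeq]
    exact hah s
  have hfree : ∀ s, FreeTriple (traceSeq s (|x|, |y|, σ * τ * z)) ↔ FreePair (applySeq s p) := by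
    intro s
    rw [(hsign.seq s).free_iff, ← traces_applySeq]
    rfl
  have hk' : kappa (|x|) (|y|) (σ * τ * z) = kappa x y z := by
    unfold kappa
    rw [← hσx, ← hτy]
    rcases hσ with h | h <;> rcases hτ with h' | h' <;> rw [h, h'] <;> ring
  rw [← hk'] at hk
  have hz' : 2 * (σ * τ * z) < |x| * |y| := by
    have hpos : 0 < |x| * |y| := by positivity
    have e : x * y * (2 * z - x * y) = |x| * |y| * (2 * (σ * τ * z) - |x| * |y|) := by
      rw [← hσx, ← hτy]
      rcases hσ with h | h <;> rcases hτ with h' | h' <;> rw [h, h'] <;> ring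
    rw [e] at hz
    nlinarith
  obtain ⟨n, hn⟩ := exists_nat_ge ((|x| + |y|) / √(kappa (|x|) (|y|) (σ * τ * z)))
  rw [div_le_iff₀ (Real.sqrt_pos.mpr hk)] at hn
  obtain ⟨⟨s, hs, hlen, huniq⟩, -⟩ := descent n _ _ _ hx2 hy2 hk hz' hne hn
  exact ⟨s, (hfree s).mp hs, hlen, fun t ht => huniq t ((hfree t).mpr ht)⟩
end
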